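/- Let D⁺ = {(x₁,x₂) ∈ ℝ² : x₁² + x₂² < 1, x₁ > 0} be the half-disk, and let h be continuous on closure(D⁺) × (0,∞), twice continuously differentiable in x and once in t on D⁺ × (0,∞), and satisfy: h_t = Δh in D⁺ × (0,∞); h = 0 on ∂D⁺ × (0,∞); 0 ≤ h ≤ 1; and h(x,t) → 1 as t → 0⁺ for every x ∈ D⁺. Then for every t > 0 and every x₂ with (1/2, x₂) ∈ D⁺ one has ∂h/∂x₁(1/2, x₂, t) < 0. In particular the point (1/2, 0), which is the unique maximum point of the distance-to-the-boundary function of D⁺, is not a spatial critical point of h(·,t) for any t > 0, so the hot spot of the grounded half-disk moves with time. -/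

import Mathlib

open Topology Filter

/-- The Laplacian of `f : ℝ² → ℝ` in the two coordinate directions. -/
noncomputable def lap2 (f : ℝ × ℝ → ℝ) (x : ℝ × ℝ) : ℝ :=
  fderiv ℝ (fun y => fderiv ℝ f y ((1, 0) : ℝ × ℝ)) x ((1, 0) : ℝ × ℝ) +
    fderiv ℝ (fun y => fderiv ℝ f y ((0, 1) : ℝ × ℝ)) x ((0, 1) : ℝ × ℝ)

/-!
Alexandrov's moving plane method, with the plane `x₁ = a` for any `a ≥ 1 / 2`. Reflection across it
sends the cap `{x₁ > a}` of the half-disk into the half-disk, so `w = h ∘ reflection - h` solves the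
heat equation on the cap, vanishes on the plane and is nonnegative on the arc. As `w → 0` initially,
the weak maximum principle gives `w ≥ 0`. Since `w` is positive on the arc, the strong maximum
principle gives `w > 0` in the cap, and then Hopf's lemma gives `-2 ∂₁h = ∂₁w > 0` on the plane.

The initial value `1` is incompatible with the boundary value `0`, so `w → 0` holds only pointwise.
The weak maximum principle then starts at a small time `s`: there the negative part of `w` is
dominated by the heat flow on the whole space of `(w(·, s))⁻`, which tends to `0` at positive times
because `w(·, s)` tends to `0` in `L¹`.
-/

open MeasureTheory Set Metric Module InnerProductSpace
open scoped Laplacian RealInnerProductSpace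

section Laplacian

variable {E : Type*} [NormedAddCommGroup E] [InnerProductSpace ℝ E] [FiniteDimensional ℝ E]

lemma hasDerivAt_nonpos_of_isLocalMinOn_Iic {g : ℝ → ℝ} {a t : ℝ} (hg : HasDerivAt g a t)
    (hmin : IsLocalMinOn g (Iic t) t) : a ≤ 0 := by
  have hcone : (t - 1) - t ∈ posTangentConeAt (Iic t) t :=
    sub_mem_posTangentConeAt_of_segment_subset <|
      (convex_Iic t).segment_subset self_mem_Iic (by simp)
  simpa using hmin.hasFDerivWithinAt_nonneg hg.hasFDerivAt.hasFDerivWithinAt hcone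

lemma hasDerivAt_nonneg_of_isLocalMinOn_Ici {g : ℝ → ℝ} {a t : ℝ} (hg : HasDerivAt g a t)
    (hmin : IsLocalMinOn g (Ici t) t) : 0 ≤ a := by
  have hcone : (t + 1) - t ∈ posTangentConeAt (Ici t) t :=
    sub_mem_posTangentConeAt_of_segment_subset <|
      (convex_Ici t).segment_subset self_mem_Ici (by simp)
  simpa using hmin.hasFDerivWithinAt_nonneg hg.hasFDerivAt.hasFDerivWithinAt hcone

lemma deriv_deriv_nonneg_of_isLocalMin {g : ℝ → ℝ} {t : ℝ} (hg : ContinuousAt g t)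
    (hmin : IsLocalMin g t) : 0 ≤ deriv (deriv g) t := by
  by_contra! hneg
  -- A negative second derivative makes `t` a local maximum too, so `g` is locally constant.
  have hmax : IsLocalMax g t := isLocalMax_of_deriv_deriv_neg hneg hmin.deriv_eq_zero hg
  have hconst : g =ᶠ[𝓝 t] fun _ => g t := by
    filter_upwards [hmin, hmax] with s using fun h₁ h₂ => le_antisymm h₂ h₁
  have : deriv (deriv g) t = 0 := by simp [hconst.deriv.deriv_eq]
  exact hneg.ne this

lemma laplacian_eq_sum_fderiv_fderiv {ι : Type*} [Fintype ι] (b : OrthonormalBasis ι ℝ E)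
    {f : E → ℝ} {x : E} (hf : ContDiffAt ℝ 2 f x) :
    Δ f x = ∑ i, fderiv ℝ (fun y => fderiv ℝ f y (b i)) x (b i) := by
  have hf' : DifferentiableAt ℝ (fderiv ℝ f) x :=
    (hf.fderiv_right (m := 1) (by norm_num)).differentiableAt (by norm_num)
  rw [laplacian_eq_iteratedFDeriv_orthonormalBasis f b]
  refine Finset.sum_congr rfl fun i _ => ?_
  rw [iteratedFDeriv_two_apply, fderiv_clm_apply hf' (differentiableAt_const _)]
  simp

lemma laplacian_nonneg_of_isLocalMin {f : E → ℝ} {x : E} (hf : ContDiffAt ℝ 2 f x)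
    (hmin : IsLocalMin f x) : 0 ≤ Δ f x := by
  rw [laplacian_eq_sum_fderiv_fderiv (stdOrthonormalBasis ℝ E) hf]
  refine Finset.sum_nonneg fun i _ => ?_
  set v := stdOrthonormalBasis ℝ E i
  have hline (s : ℝ) : HasDerivAt (fun s : ℝ => x + s • v) v s := by
    simpa using ((hasDerivAt_id s).smul_const v).const_add x
  have hx : Tendsto (fun s : ℝ => x + s • v) (𝓝 0) (𝓝 x) := by
    simpa using (hline 0).continuousAt.tendsto
  have hderiv : deriv (fun s : ℝ => f (x + s • v)) =ᶠ[𝓝 0] fun s => fderiv ℝ f (x + s • v) v := by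
    filter_upwards [hx.eventually (hf.eventually (by simp))] with s hs
    exact ((hs.differentiableAt (by norm_num)).hasFDerivAt.comp_hasDerivAt s (hline s)).deriv
  have hf' : DifferentiableAt ℝ (fun y => fderiv ℝ f y v) (x + (0 : ℝ) • v) := by
    simpa using ((hf.fderiv_right (m := 1) (by norm_num)).differentiableAt (by norm_num)).clm_apply
      (differentiableAt_const v)
  have hderiv₂ : HasDerivAt (fun s : ℝ => fderiv ℝ f (x + s • v) v)
      (fderiv ℝ (fun y => fderiv ℝ f y v) (x + (0 : ℝ) • v) v) 0 :=
    HasFDerivAt.comp_hasDerivAt (l := fun y => fderiv ℝ f y v) 0 hf'.hasFDerivAt (hline 0)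
  have hmin' : IsLocalMin (fun s : ℝ => f (x + s • v)) 0 := by
    simpa [IsLocalMin, IsMinFilter] using hx.eventually hmin
  have hcont : ContinuousAt (fun s : ℝ => f (x + s • v)) 0 :=
    ContinuousAt.comp (by simpa using hf.continuousAt) (hline 0).continuousAt
  have hnonneg := deriv_deriv_nonneg_of_isLocalMin hcont hmin'
  rw [hderiv.deriv_eq, hderiv₂.deriv] at hnonneg
  simpa using hnonneg

lemma laplacian_comp_norm_sub_sq {φ : ℝ → ℝ} {c x : E} (hφ : ContDiffAt ℝ 2 φ (‖x - c‖ ^ 2)) :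
    Δ (fun y => φ (‖y - c‖ ^ 2)) x = 4 * ‖x - c‖ ^ 2 * deriv (deriv φ) (‖x - c‖ ^ 2) +
      2 * finrank ℝ E * deriv φ (‖x - c‖ ^ 2) := by
  set b := stdOrthonormalBasis ℝ E
  have hq : ContDiff ℝ 2 fun y : E => ‖y - c‖ ^ 2 := (contDiff_id.sub contDiff_const).norm_sq ℝ
  have hsub (y : E) : HasFDerivAt (fun y : E => y - c) (.id ℝ E) y := (hasFDerivAt_id y).sub_const c
  have hfderiv (v : E) : (fun y => fderiv ℝ (fun y => φ (‖y - c‖ ^ 2)) y v) =ᶠ[𝓝 x]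
      fun y => deriv φ (‖y - c‖ ^ 2) * (2 * ⟪y - c, v⟫) := by
    filter_upwards [hq.continuous.continuousAt.eventually (hφ.eventually (by simp))] with y hy
    have hφy := (hy.differentiableAt (by norm_num)).hasDerivAt
    have hcomp : HasFDerivAt (fun y => φ (‖y - c‖ ^ 2)) _ y :=
      hφy.comp_hasFDerivAt y (hsub y).norm_sq
    simp [hcomp.fderiv, inner_sub_left]
  have hφ' : DifferentiableAt ℝ (deriv φ) (‖x - c‖ ^ 2) :=
    ((hφ.fderiv_right (m := 1) (by norm_num)).differentiableAt (by norm_num)).clm_apply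
      (differentiableAt_const 1)
  have hfderiv₂ (v : E) : fderiv ℝ (fun y => fderiv ℝ (fun y => φ (‖y - c‖ ^ 2)) y v) x v =
      4 * deriv (deriv φ) (‖x - c‖ ^ 2) * ⟪x - c, v⟫ ^ 2 + 2 * deriv φ (‖x - c‖ ^ 2) * ‖v‖ ^ 2 := by
    have hprod : HasFDerivAt (fun y => deriv φ (‖y - c‖ ^ 2) * (2 * ⟪y - c, v⟫)) _ x :=
      HasFDerivAt.mul (hφ'.hasDerivAt.comp_hasFDerivAt (h₂ := deriv φ) x (hsub x).norm_sq)
        (((hsub x).inner ℝ (hasFDerivAt_const v x)).const_mul 2)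
    rw [(hfderiv v).fderiv_eq, hprod.fderiv]
    simp only [inner_sub_left, map_sub, ContinuousLinearMap.comp_id, add_apply, smul_apply,
      ContinuousLinearMap.comp_apply, ContinuousLinearMap.prod_apply, ContinuousLinearMap.id_apply,
      zero_apply, fderivInnerCLM_apply, inner_zero_right, real_inner_self_eq_norm_sq, zero_add,
      smul_eq_mul, sub_apply, coe_innerSL_apply, nsmul_eq_mul, Nat.cast_ofNat]
    ring
  have hcomp : ContDiffAt ℝ 2 (fun y => φ (‖y - c‖ ^ 2)) x := hφ.comp x hq.contDiffAt
  rw [laplacian_eq_sum_fderiv_fderiv b hcomp]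
  simp_rw [hfderiv₂, Finset.sum_add_distrib, ← Finset.mul_sum, b.sum_sq_inner_left,
    b.norm_eq_one]
  simp only [one_pow, Finset.sum_const, Finset.card_univ, Fintype.card_fin, nsmul_eq_mul, mul_one]
  ring

end Laplacian

section HeatOperator

variable {E : Type*} [NormedAddCommGroup E] [InnerProductSpace ℝ E]

lemma affineIsometryEquiv_apply_eq_add (σ : E ≃ᵃⁱ[ℝ] E) (x : E) :
    σ x = σ.linearIsometryEquiv x + σ 0 := by
  simpa using σ.map_vadd 0 x

lemma contDiff_affineIsometryEquiv {n : WithTop ℕ∞} (σ : E ≃ᵃⁱ[ℝ] E) : ContDiff ℝ n σ := by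
  rw [funext (affineIsometryEquiv_apply_eq_add σ)]
  exact σ.linearIsometryEquiv.contDiff.add contDiff_const

variable [FiniteDimensional ℝ E]

lemma laplacian_comp_affineIsometryEquiv (σ : E ≃ᵃⁱ[ℝ] E) (f : E → ℝ) (x : E) :
    Δ (fun y => f (σ y)) x = Δ f (σ x) := by
  set L := σ.linearIsometryEquiv
  have hcomp : (fun y => f (σ y)) = (fun z => f (z + σ 0)) ∘ L.toContinuousLinearEquiv :=
    funext fun y => congrArg f (affineIsometryEquiv_apply_eq_add σ y)
  have hiter := L.toContinuousLinearEquiv.iteratedFDerivWithin_comp_right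
    (fun z => f (z + σ 0)) uniqueDiffOn_univ (mem_univ (L x)) 2
  simp only [preimage_univ, iteratedFDerivWithin_univ, iteratedFDeriv_comp_add_right] at hiter
  rw [hcomp, laplacian_eq_iteratedFDeriv_stdOrthonormalBasis,
    laplacian_eq_iteratedFDeriv_orthonormalBasis f ((stdOrthonormalBasis ℝ E).map L)]
  refine Finset.sum_congr rfl fun i _ => ?_
  rw [hiter, affineIsometryEquiv_apply_eq_add σ x,
    ContinuousMultilinearMap.compContinuousLinearMap_apply]
  exact congrArg (iteratedFDeriv ℝ 2 f (L x + σ 0)) (by ext j; fin_cases j <;> rfl)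

/-- `HasHeatOpAt u a x t` says that `u` is `C²` in space and differentiable in time at `(x, t)`,
with `∂ₜu - Δu = a` there. -/
structure HasHeatOpAt (u : E → ℝ → ℝ) (a : ℝ) (x : E) (t : ℝ) : Prop where
  contDiffAt : ContDiffAt ℝ 2 (fun y => u y t) x
  differentiableAt : DifferentiableAt ℝ (u x) t
  deriv_sub_laplacian : deriv (u x) t - Δ (fun y => u y t) x = a

/-- Pointwise supersolutions of the heat equation: `∂ₜu - Δu ≥ 0` at `(x, t)`. -/
def IsHeatSupersolutionAt (u : E → ℝ → ℝ) (x : E) (t : ℝ) : Prop :=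
  ∃ a, 0 ≤ a ∧ HasHeatOpAt u a x t

namespace HasHeatOpAt

variable {u v : E → ℝ → ℝ} {a b : ℝ} {x : E} {t : ℝ}

lemma isHeatSupersolutionAt (hu : HasHeatOpAt u a x t) (ha : 0 ≤ a) :
    IsHeatSupersolutionAt u x t :=
  ⟨a, ha, hu⟩

lemma add_const_mul (hu : HasHeatOpAt u a x t) (hv : HasHeatOpAt v b x t) (c : ℝ) :
    HasHeatOpAt (fun y s => u y s + c * v y s) (a + c * b) x t where
  contDiffAt := hu.contDiffAt.add (contDiffAt_const.mul hv.contDiffAt)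
  differentiableAt := hu.differentiableAt.add (hv.differentiableAt.const_mul c)
  deriv_sub_laplacian := by
    have hderiv : deriv (fun s => u x s + c * v x s) t = deriv (u x) t + c * deriv (v x) t :=
      (hu.differentiableAt.hasDerivAt.add (hv.differentiableAt.hasDerivAt.const_mul c)).deriv
    have hlap : Δ (fun y => u y t + c * v y t) x =
        Δ (fun y => u y t) x + c * Δ (fun y => v y t) x :=
      (hu.contDiffAt.laplacian_add (hv.contDiffAt.const_smul c)).trans
        (congrArg _ (laplacian_smul c hv.contDiffAt))
    rw [hderiv, hlap, ← hu.deriv_sub_laplacian, ← hv.deriv_sub_laplacian]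
    ring

lemma comp_sub_const {s : ℝ} (hu : HasHeatOpAt u a x (t - s)) :
    HasHeatOpAt (fun y τ => u y (τ - s)) a x t where
  contDiffAt := hu.contDiffAt
  differentiableAt := DifferentiableAt.comp t hu.differentiableAt (differentiableAt_id.sub_const s)
  deriv_sub_laplacian := by simpa [deriv_comp_sub_const] using hu.deriv_sub_laplacian

lemma comp_affineIsometryEquiv (σ : E ≃ᵃⁱ[ℝ] E) (hu : HasHeatOpAt u a (σ x) t) :
    HasHeatOpAt (fun y => u (σ y)) a x t where
  contDiffAt := hu.contDiffAt.comp x (contDiff_affineIsometryEquiv σ).contDiffAt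
  differentiableAt := hu.differentiableAt
  deriv_sub_laplacian := by
    rw [laplacian_comp_affineIsometryEquiv σ (fun y => u y t) x, hu.deriv_sub_laplacian]

end HasHeatOpAt

lemma IsHeatSupersolutionAt.add_const_mul {u v : E → ℝ → ℝ} {b c : ℝ} {x : E} {t : ℝ}
    (hu : IsHeatSupersolutionAt u x t) (hv : HasHeatOpAt v b x t) (hcb : 0 ≤ c * b) :
    IsHeatSupersolutionAt (fun y s => u y s + c * v y s) x t :=
  let ⟨_, ha, hu⟩ := hu
  (hu.add_const_mul hv c).isHeatSupersolutionAt (add_nonneg ha hcb)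

lemma nonneg_of_isHeatSupersolutionAt {A : Set (E × ℝ)} (hA : IsCompact A) {u : E → ℝ → ℝ}
    (hcont : ContinuousOn (Function.uncurry u) A)
    (hu : ∀ x t, (x, t) ∈ A →
      0 ≤ u x t ∨ A ∈ 𝓝 x ×ˢ 𝓝[≤] t ∧ IsHeatSupersolutionAt u x t)
    {x : E} {t : ℝ} (hxt : (x, t) ∈ A) : 0 ≤ u x t := by
  by_contra! hneg
  obtain ⟨⟨x₀, m⟩, -, hm⟩ := hA.exists_isMinOn ⟨_, hxt⟩ continuousOn_snd
  have hm' {y : E} {s : ℝ} (hys : (y, s) ∈ A) : m ≤ s := hm hys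
  -- A slightly tilted `u` still has a negative minimum, where the heat operator is negative.
  obtain ⟨ε, hε, hεt⟩ : ∃ ε > 0, u x t + ε * (t - m) < 0 := by
    have hpos : 0 < t - m + 1 := by linarith [hm' hxt]
    refine ⟨-u x t / (t - m + 1), by apply div_pos <;> linarith, ?_⟩
    rw [div_mul_eq_mul_div, ← lt_neg_iff_add_neg', div_lt_iff₀ hpos]
    nlinarith [hm' hxt]
  have hcont' : ContinuousOn (fun q : E × ℝ => u q.1 q.2 + ε * (q.2 - m)) A :=
    ContinuousOn.add hcont (by fun_prop)
  obtain ⟨⟨y, s⟩, hys, hmin⟩ := hA.exists_isMinOn ⟨_, hxt⟩ hcont'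
  have hneg' : u y s < 0 := by
    have hle : u y s + ε * (s - m) ≤ u x t + ε * (t - m) := hmin hxt
    nlinarith [hm' hys]
  obtain ⟨hnhds, a, ha, hop⟩ := (hu y s hys).resolve_left hneg'.not_ge
  have hmin' : ∀ᶠ q in 𝓝 y ×ˢ 𝓝[≤] s, u y s + ε * (s - m) ≤ u q.1 q.2 + ε * (q.2 - m) :=
    mem_of_superset hnhds hmin
  have hspace : IsLocalMin (fun z => u z s) y := by
    filter_upwards [hmin'.curry] with z hz
    simpa using hz.self_of_nhdsWithin self_mem_Iic
  have htime : IsLocalMinOn (fun τ => u y τ + ε * (τ - m)) (Iic s) s :=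
    hmin'.curry.self_of_nhds
  have hderiv : HasDerivAt (fun τ => u y τ + ε * (τ - m)) (deriv (u y) s + ε * 1) s :=
    hop.differentiableAt.hasDerivAt.add (((hasDerivAt_id s).sub_const m).const_mul ε)
  linarith [hop.deriv_sub_laplacian, laplacian_nonneg_of_isLocalMin hop.contDiffAt hspace,
    hasDerivAt_nonpos_of_isLocalMinOn_Iic hderiv htime]

lemma eventually_le_prod_nhdsLE {X : Type*} [TopologicalSpace X] {f g : X × ℝ → ℝ} {x : X} {t : ℝ}
    (hf : Continuous f) (hg : Continuous g) (hlt : f (x, t) < g (x, t)) :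
    ∀ᶠ q in 𝓝 x ×ˢ 𝓝[≤] t, f q ≤ g q := by
  have hnhds := hf.continuousAt.eventually_lt hg.continuousAt hlt
  rw [nhds_prod_eq] at hnhds
  exact (hnhds.filter_mono (prod_mono_right _ nhdsWithin_le_nhds)).mono fun _ => le_of_lt

end HeatOperator

section ParametricIntegral

variable {H Y G : Type*} [NormedAddCommGroup H] [NormedSpace ℝ H] [NormedAddCommGroup G]
  [NormedSpace ℝ G] [TopologicalSpace Y] [T2Space Y] [MeasurableSpace Y] [OpensMeasurableSpace Y]
  {μ : Measure Y} [IsFiniteMeasureOnCompacts μ]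

lemma hasFDerivAt_integral_of_compact_support {F : H → Y → G} {F' : H → Y → H →L[ℝ] G} {p : H}
    {s : Set H} {k : Set Y} (hs : IsCompact s) (hsp : s ∈ 𝓝 p) (hk : IsCompact k)
    (hF : ∀ q ∈ s, Continuous (F q)) (hF' : ContinuousOn (Function.uncurry F') (s ×ˢ univ))
    (hFk : ∀ q ∈ s, ∀ y ∉ k, F q y = 0) (hF'k : ∀ q ∈ s, ∀ y ∉ k, F' q y = 0)
    (hderiv : ∀ q ∈ s, ∀ y, HasFDerivAt (F · y) (F' q y) q) :
    HasFDerivAt (fun q => ∫ y, F q y ∂μ) (∫ y, F' p y ∂μ) p := by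
  have hp : p ∈ s := mem_of_mem_nhds hsp
  have hint (q : H) (hq : q ∈ s) : Integrable (F q) μ :=
    (hF q hq).integrable_of_hasCompactSupport (.intro hk (hFk q hq))
  have hint' : Integrable (F' p) μ :=
    (hF'.comp_continuous (by fun_prop : Continuous fun y => (p, y))
      fun y => ⟨hp, mem_univ y⟩).integrable_of_hasCompactSupport (.intro hk (hF'k p hp))
  obtain ⟨C, hC⟩ := (hs.prod hk).exists_bound_of_continuousOn
    (hF'.mono (prod_mono_right (subset_univ k)))
  refine hasFDerivAt_integral_of_dominated_of_fderiv_le (bound := k.indicator fun _ => C) hsp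
    (eventually_of_mem hsp fun q hq => (hint q hq).aestronglyMeasurable) (hint p hp)
    hint'.aestronglyMeasurable (ae_of_all _ fun y q hq => ?_)
    ((integrable_indicator_iff hk.measurableSet).2 (integrableOn_const hk.measure_ne_top))
    (ae_of_all _ fun y q hq => hderiv q hq y)
  by_cases hy : y ∈ k
  · simpa [hy] using hC (q, y) ⟨hq, hy⟩
  · simp [hy, hF'k q hq y hy]

lemma hasDerivAt_integral_of_compact_support {F F' : ℝ → Y → G} {p : ℝ}
    {s : Set ℝ} {k : Set Y} (hs : IsCompact s) (hsp : s ∈ 𝓝 p) (hk : IsCompact k)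
    (hF : ∀ q ∈ s, Continuous (F q)) (hF' : ContinuousOn (Function.uncurry F') (s ×ˢ univ))
    (hFk : ∀ q ∈ s, ∀ y ∉ k, F q y = 0) (hF'k : ∀ q ∈ s, ∀ y ∉ k, F' q y = 0)
    (hderiv : ∀ q ∈ s, ∀ y, HasDerivAt (F · y) (F' q y) q) :
    HasDerivAt (fun q => ∫ y, F q y ∂μ) (∫ y, F' p y ∂μ) p := by
  set L : G ≃L[ℝ] (ℝ →L[ℝ] G) := ContinuousLinearMap.toSpanSingletonCLE
  have hL : L (∫ y, F' p y ∂μ) = ∫ y, L (F' p y) ∂μ := (L.integral_comp_comm (F' p)).symm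
  change HasFDerivAt _ (L (∫ y, F' p y ∂μ)) p
  rw [hL]
  exact hasFDerivAt_integral_of_compact_support (F' := fun q y => L (F' q y)) hs hsp hk hF
    (L.continuous.comp_continuousOn hF') hFk (fun q hq y hy => by simp [hF'k q hq y hy])
    fun q hq y => (hderiv q hq y).hasFDerivAt

end ParametricIntegral

section Convolution

variable {E : Type*} [NormedAddCommGroup E] [InnerProductSpace ℝ E] [FiniteDimensional ℝ E]
  [MeasurableSpace E] [BorelSpace E] {μ : Measure E} [IsFiniteMeasureOnCompacts μ] {f g : E → ℝ}

lemma fderiv_integral_mul_comp_sub (hf : Continuous f) (hfc : HasCompactSupport f)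
    (hg : ContDiff ℝ 1 g) (x : E) :
    DifferentiableAt ℝ (fun x => ∫ y, f y * g (x - y) ∂μ) x ∧
      ∀ v, fderiv ℝ (fun x => ∫ y, f y * g (x - y) ∂μ) x v =
        ∫ y, f y * fderiv ℝ g (x - y) v ∂μ := by
  have hfg' (x : E) : Continuous fun y => f y • fderiv ℝ g (x - y) :=
    hf.smul ((hg.continuous_fderiv one_ne_zero).comp (by fun_prop))
  have hF : HasFDerivAt (fun x => ∫ y, f y * g (x - y) ∂μ)
      (∫ y, f y • fderiv ℝ g (x - y) ∂μ) x := by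
    refine hasFDerivAt_integral_of_compact_support (F' := fun x y => f y • fderiv ℝ g (x - y))
      (isCompact_closedBall x 1)
      (closedBall_mem_nhds x one_pos) hfc (fun q _ => ?_) ?_
      (fun q _ y hy => ?_) (fun q _ y hy => ?_) fun q _ y => ?_
    · exact hf.mul (hg.continuous.comp (by fun_prop))
    · exact (Continuous.smul (hf.comp continuous_snd)
        ((hg.continuous_fderiv one_ne_zero).comp (continuous_fst.sub continuous_snd))).continuousOn
    · simp [image_eq_zero_of_notMem_tsupport hy]
    · simp [image_eq_zero_of_notMem_tsupport hy]
    · exact (((hg.differentiable one_ne_zero).differentiableAt.hasFDerivAt.comp q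
        ((hasFDerivAt_id q).sub_const y)).const_mul (f y))
  refine ⟨hF.differentiableAt, fun v => ?_⟩
  rw [hF.fderiv, ContinuousLinearMap.integral_apply
    ((hfg' x).integrable_of_hasCompactSupport hfc.smul_right)]
  simp

lemma contDiff_integral_mul_comp_sub (hf : Continuous f) (hfc : HasCompactSupport f) {n : ℕ}
    (hg : ContDiff ℝ n g) : ContDiff ℝ n fun x => ∫ y, f y * g (x - y) ∂μ := by
  induction n generalizing g with
  | zero =>
    rw [Nat.cast_zero, contDiff_zero] at hg ⊢
    rw [← continuousOn_univ]
    refine continuousOn_integral_of_compact_support hfc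
      (Continuous.continuousOn (by unfold Function.uncurry; fun_prop)) fun x y _ hy => ?_
    simp [image_eq_zero_of_notMem_tsupport hy]
  | succ n ih =>
    have hderiv := fderiv_integral_mul_comp_sub (μ := μ) hf hfc (hg.of_le (by simp))
    rw [Nat.cast_succ, contDiff_succ_iff_fderiv_apply] at hg ⊢
    refine ⟨fun x => (hderiv x).1, by simp, fun v => ?_⟩
    simpa only [(hderiv _).2 v] using ih (hg.2.2 v)

lemma laplacian_integral_mul_comp_sub (hf : Continuous f) (hfc : HasCompactSupport f)
    (hg : ContDiff ℝ 2 g) (x : E) :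
    Δ (fun x => ∫ y, f y * g (x - y) ∂μ) x = ∫ y, f y * Δ g (x - y) ∂μ := by
  have hg' (v : E) : ContDiff ℝ 1 fun x => fderiv ℝ g x v :=
    (hg.fderiv_right (by norm_num)).clm_apply contDiff_const
  have hg'' (v : E) : Continuous fun x => fderiv ℝ (fun z => fderiv ℝ g z v) x v :=
    ((hg' v).continuous_fderiv one_ne_zero).clm_apply continuous_const
  have hfderiv := fun v => funext fun x =>
    (fderiv_integral_mul_comp_sub (μ := μ) hf hfc (hg.of_le (by norm_num)) x).2 v
  have hΔ (y : E) := laplacian_eq_sum_fderiv_fderiv (stdOrthonormalBasis ℝ E)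
    (hg.contDiffAt (x := x - y))
  rw [laplacian_eq_sum_fderiv_fderiv (stdOrthonormalBasis ℝ E)
    (contDiff_integral_mul_comp_sub hf hfc (n := 2) hg).contDiffAt]
  simp_rw [hfderiv, hΔ, Finset.mul_sum]
  rw [integral_finsetSum]
  · exact Finset.sum_congr rfl fun i _ => (fderiv_integral_mul_comp_sub hf hfc (hg' _) x).2 _
  · exact fun i _ => (hf.mul ((hg'' _).comp (by fun_prop))).integrable_of_hasCompactSupport
      hfc.mul_right

end Convolution

section HeatKernel

variable {E : Type*} [NormedAddCommGroup E] [InnerProductSpace ℝ E]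

/-- The Gauss-Weierstrass kernel `(4πt)^(-n/2) exp(-‖x‖²/(4t))` of the heat equation, where
`n` is the dimension of `E`; meaningful for `t > 0`. -/
noncomputable def heatKernel (x : E) (t : ℝ) : ℝ :=
  (4 * Real.pi * t) ^ (-(finrank ℝ E : ℝ) / 2) * Real.exp (-‖x‖ ^ 2 / (4 * t))

variable {x : E} {t : ℝ}

lemma heatKernel_nonneg (ht : 0 ≤ t) : 0 ≤ heatKernel x t := by
  unfold heatKernel
  positivity

lemma heatKernel_le (ht : 0 ≤ t) :
    heatKernel x t ≤ (4 * Real.pi * t) ^ (-(finrank ℝ E : ℝ) / 2) :=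
  mul_le_of_le_one_right (by positivity) <| Real.exp_le_one_iff.2 <|
    div_nonpos_of_nonpos_of_nonneg (neg_nonpos.2 (sq_nonneg _)) (by positivity)

lemma heatKernel_neg : heatKernel (-x) t = heatKernel x t := by
  simp [heatKernel]

lemma heatKernel_sqrt_smul (z : E) (ht : 0 < t) :
    heatKernel (√t • z) t = (√t ^ finrank ℝ E)⁻¹ * heatKernel z 1 := by
  have hpow : t ^ (-(finrank ℝ E : ℝ) / 2) = (√t ^ finrank ℝ E)⁻¹ := by
    rw [neg_div, Real.rpow_neg ht.le, Real.sqrt_eq_rpow, ← Real.rpow_mul_natCast ht.le]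
    ring_nf
  rw [heatKernel, heatKernel, Real.mul_rpow (by positivity) ht.le, hpow, norm_smul, mul_pow,
    Real.norm_of_nonneg (Real.sqrt_nonneg t), Real.sq_sqrt ht.le]
  field_simp

lemma contDiff_heatKernel {n : WithTop ℕ∞} : ContDiff ℝ n fun x : E => heatKernel x t :=
  contDiff_const.mul (((contDiff_norm_sq ℝ).neg.div_const _).exp)

lemma continuousOn_heatKernel :
    ContinuousOn (fun q : E × ℝ => heatKernel q.1 q.2) (univ ×ˢ Ioi 0) := by
  have hpos : ∀ q ∈ (univ : Set E) ×ˢ Ioi (0 : ℝ), 0 < q.2 := fun q hq => hq.2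
  refine (ContinuousOn.rpow_const (by fun_prop) fun q hq => .inl ?_).mul
    (ContinuousOn.rexp (ContinuousOn.div (by fun_prop) (by fun_prop) fun q hq => ?_))
  all_goals have := hpos q hq; positivity

lemma hasDerivAt_heatKernel (x : E) (ht : 0 < t) :
    HasDerivAt (heatKernel x)
      ((‖x‖ ^ 2 / (4 * t ^ 2) - finrank ℝ E / (2 * t)) * heatKernel x t) t := by
  have hpow := ((hasDerivAt_id t).const_mul (4 * Real.pi)).rpow_const
    (p := -(finrank ℝ E : ℝ) / 2) (.inl (by positivity))
  have hexp := (((hasDerivAt_id t).const_mul 4).fun_inv (by positivity)).const_mul (-‖x‖ ^ 2) |>.exp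
  refine (hpow.mul hexp).congr_deriv ?_
  simp only [id, ← div_eq_mul_inv, heatKernel]
  rw [Real.rpow_sub_one (by positivity)]
  field_simp
  ring

lemma laplacian_heatKernel [FiniteDimensional ℝ E] (x : E) (ht : 0 < t) :
    Δ (fun y : E => heatKernel y t) x =
      (‖x‖ ^ 2 / (4 * t ^ 2) - finrank ℝ E / (2 * t)) * heatKernel x t := by
  set C := (4 * Real.pi * t) ^ (-(finrank ℝ E : ℝ) / 2) with hC
  have hderiv (c : ℝ) : deriv (fun s => c * Real.exp (-s / (4 * t))) =
      fun s => -c / (4 * t) * Real.exp (-s / (4 * t)) := by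
    ext s
    have hexp : HasDerivAt (fun s => c * Real.exp (-s / (4 * t)))
        (c * (Real.exp (-s / (4 * t)) * (-1 / (4 * t)))) s :=
      ((hasDerivAt_neg s).div_const (4 * t)).exp.const_mul c
    rw [hexp.deriv]
    ring
  have hφ : ContDiff ℝ 2 fun s => C * Real.exp (-s / (4 * t)) :=
    contDiff_const.mul (contDiff_neg.div_const _).exp
  have h := laplacian_comp_norm_sub_sq (c := 0) (x := x) hφ.contDiffAt
  simp only [sub_zero, hderiv] at h
  refine h.trans ?_
  simp only [heatKernel, ← hC]
  field_simp
  ring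

variable [MeasurableSpace E] [BorelSpace E] [FiniteDimensional ℝ E]

lemma integral_heatKernel (ht : 0 < t) : ∫ x : E, heatKernel x t = 1 := by
  have h := GaussianFourier.integral_rexp_neg_mul_sq_norm (V := E) (b := 1 / (4 * t))
    (by positivity)
  have hexp (x : E) : -‖x‖ ^ 2 / (4 * t) = -(1 / (4 * t)) * ‖x‖ ^ 2 := by ring
  simp only [heatKernel, integral_const_mul, hexp, h]
  rw [show Real.pi / (1 / (4 * t)) = 4 * Real.pi * t by field_simp, neg_div,
    Real.rpow_neg (by positivity), inv_mul_cancel₀ (by positivity)]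

lemma integrable_heatKernel (ht : 0 < t) : Integrable fun x : E => heatKernel x t :=
  integrable_of_integral_eq_one (integral_heatKernel ht)

end HeatKernel

section HeatFlow

variable {E : Type*} [NormedAddCommGroup E] [InnerProductSpace ℝ E] [FiniteDimensional ℝ E]
  [MeasurableSpace E] [BorelSpace E] {f : E → ℝ} {x : E} {t : ℝ}

/-- The solution `heatFlow f x t` of the heat equation with initial datum `f`. Rescaling the
integration variable in `∫ f y * heatKernel (x - y) t` makes the formula valid at `t = 0` too. -/
noncomputable def heatFlow (f : E → ℝ) (x : E) (t : ℝ) : ℝ :=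
  ∫ z, f (x + √t • z) * heatKernel z 1

lemma heatFlow_zero : heatFlow f x 0 = f x := by
  simp [heatFlow, integral_const_mul, integral_heatKernel]

lemma heatFlow_nonneg (hf : ∀ y, 0 ≤ f y) : 0 ≤ heatFlow f x t :=
  integral_nonneg fun _ => mul_nonneg (hf _) (heatKernel_nonneg zero_le_one)

lemma continuous_heatFlow (hf : Continuous f) (hfc : HasCompactSupport f) :
    Continuous (Function.uncurry (heatFlow f)) := by
  obtain ⟨C, hC⟩ := hfc.exists_bound_of_continuous hf
  refine continuous_of_dominated (F := fun (q : E × ℝ) z => f (q.1 + √q.2 • z) * heatKernel z 1)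
    (bound := fun z => C * heatKernel z 1) (fun q => ?_) (fun q => ae_of_all _ fun z => ?_)
    ((integrable_heatKernel one_pos).const_mul C) (ae_of_all _ fun z => by fun_prop)
  · have := (contDiff_heatKernel (E := E) (t := 1) (n := 0)).continuous
    exact Continuous.aestronglyMeasurable (by fun_prop)
  · have hK : 0 ≤ heatKernel z 1 := heatKernel_nonneg zero_le_one
    rw [norm_mul, Real.norm_of_nonneg hK]
    exact mul_le_mul_of_nonneg_right (hC _) hK

lemma heatFlow_eq_integral_mul_comp_sub (ht : 0 < t) :
    heatFlow f x t = ∫ y, f y * heatKernel (x - y) t := by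
  have hscale (z : E) : f (x + √t • z) * heatKernel z 1 =
      √t ^ finrank ℝ E * (f (x + √t • z) * heatKernel (√t • z) t) := by
    rw [heatKernel_sqrt_smul z ht]
    field_simp
  calc heatFlow f x t
      = √t ^ finrank ℝ E * ∫ z, f (x + √t • z) * heatKernel (√t • z) t := by
        simp only [heatFlow, hscale, integral_const_mul]
    _ = ∫ z, f (x + z) * heatKernel z t := by
        rw [Measure.integral_comp_smul_of_nonneg volume (fun z => f (x + z) * heatKernel z t) √t
          (hR := Real.sqrt_nonneg t), smul_eq_mul, mul_inv_cancel_left₀ (by positivity)]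
    _ = ∫ y, f y * heatKernel (y - x) t := by
        simpa using integral_add_left_eq_self (fun y => f y * heatKernel (y - x) t) x
    _ = ∫ y, f y * heatKernel (x - y) t := by
        simp_rw [← neg_sub x, heatKernel_neg]

lemma heatFlow_le (hf : Continuous f) (hfc : HasCompactSupport f) (hf₀ : ∀ y, 0 ≤ f y)
    (ht : 0 < t) :
    heatFlow f x t ≤ (4 * Real.pi * t) ^ (-(finrank ℝ E : ℝ) / 2) * ∫ y, f y := by
  have := (contDiff_heatKernel (E := E) (t := t) (n := 0)).continuous
  rw [heatFlow_eq_integral_mul_comp_sub ht, mul_comm, ← integral_mul_const]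
  refine integral_mono ?_ ((hf.integrable_of_hasCompactSupport hfc).mul_const _)
    fun y => mul_le_mul_of_nonneg_left (heatKernel_le ht.le) (hf₀ y)
  exact Continuous.integrable_of_hasCompactSupport (by fun_prop) hfc.mul_right

lemma hasDerivAt_heatFlow (hf : Continuous f) (hfc : HasCompactSupport f) (x : E) (ht : 0 < t) :
    HasDerivAt (heatFlow f x) (∫ y, f y *
      ((‖x - y‖ ^ 2 / (4 * t ^ 2) - finrank ℝ E / (2 * t)) * heatKernel (x - y) t)) t := by
  set S := Icc (t / 2) (2 * t)
  have hS : S ∈ 𝓝 t := Icc_mem_nhds (by linarith) (by linarith)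
  have hpos : ∀ s ∈ S, 0 < s := fun s hs => (half_pos ht).trans_le hs.1
  have hflow : heatFlow f x =ᶠ[𝓝 t] fun s => ∫ y, f y * heatKernel (x - y) s :=
    eventually_of_mem hS fun s hs => heatFlow_eq_integral_mul_comp_sub (hpos s hs)
  refine HasDerivAt.congr_of_eventuallyEq (hasDerivAt_integral_of_compact_support
    (F' := fun s y => f y *
      ((‖x - y‖ ^ 2 / (4 * s ^ 2) - finrank ℝ E / (2 * s)) * heatKernel (x - y) s))
    isCompact_Icc hS hfc (fun s _ => ?_) ?_
    (fun s _ y hy => by simp [image_eq_zero_of_notMem_tsupport hy])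
    (fun s _ y hy => by simp [image_eq_zero_of_notMem_tsupport hy])
    fun s hs y => (hasDerivAt_heatKernel (x - y) (hpos s hs)).const_mul (f y)) hflow
  · have := (contDiff_heatKernel (E := E) (t := s) (n := 0)).continuous
    fun_prop
  · have hK : ContinuousOn (fun q : ℝ × E => heatKernel (x - q.2) q.1) (S ×ˢ univ) :=
      continuousOn_heatKernel.comp (f := fun q : ℝ × E => (x - q.2, q.1)) (by fun_prop)
        fun q hq => ⟨mem_univ _, hpos _ hq.1⟩
    have hne (q : ℝ × E) (hq : q ∈ S ×ˢ univ) : q.1 ≠ 0 := (hpos _ hq.1).ne'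
    refine (hf.comp continuous_snd).continuousOn.mul (.mul (.sub ?_ ?_) hK)
    all_goals exact ContinuousOn.div (by fun_prop) (by fun_prop) fun q hq => by simp [hne q hq]

lemma hasHeatOpAt_heatFlow (hf : Continuous f) (hfc : HasCompactSupport f) (x : E) (ht : 0 < t) :
    HasHeatOpAt (heatFlow f) 0 x t := by
  have htime := hasDerivAt_heatFlow hf hfc x ht
  have hspace : (fun y => heatFlow f y t) = fun y => ∫ z, f z * heatKernel (y - z) t :=
    funext fun y => heatFlow_eq_integral_mul_comp_sub ht
  refine ⟨?_, htime.differentiableAt, ?_⟩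
  · rw [hspace]
    exact (contDiff_integral_mul_comp_sub hf hfc (n := 2) contDiff_heatKernel).contDiffAt
  · rw [htime.deriv, hspace, laplacian_integral_mul_comp_sub hf hfc contDiff_heatKernel]
    simp_rw [laplacian_heatKernel _ ht]
    exact sub_self _

end HeatFlow

section PointwiseInitialData

variable {X : Type*} {U : Set X}

lemma continuous_indicator_negPart [TopologicalSpace X] {g : X → ℝ}
    (hg : ContinuousOn g (closure U)) (hbdry : ∀ x ∈ frontier U, 0 ≤ g x) :
    Continuous (U.indicator fun x => max 0 (-g x)) :=
  continuous_indicator (fun x hx => by simpa using hbdry x hx) (continuousOn_const.sup hg.neg)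

lemma hasCompactSupport_indicator [PseudoMetricSpace X] [ProperSpace X]
    (hU : Bornology.IsBounded U) (g : X → ℝ) : HasCompactSupport (U.indicator g) :=
  .intro hU.isCompact_closure fun _ hx => indicator_of_notMem (fun h => hx (subset_closure h)) g

variable {E : Type*} [NormedAddCommGroup E] [InnerProductSpace ℝ E] [FiniteDimensional ℝ E]
  {U : Set E} {w : E → ℝ → ℝ} {M : ℝ}
variable [MeasurableSpace E] [BorelSpace E]

lemma nonneg_add_heatFlow_negPart (hU : IsOpen U) (hUb : Bornology.IsBounded U)
    (hcont : ContinuousOn (Function.uncurry w) (closure U ×ˢ Ioi 0))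
    (hw : ∀ x ∈ U, ∀ t > 0, IsHeatSupersolutionAt w x t)
    (hbdry : ∀ x ∈ frontier U, ∀ t > 0, 0 ≤ w x t) {s t : ℝ} (hs : 0 < s) (hst : s ≤ t)
    {x : E} (hx : x ∈ closure U) :
    0 ≤ w x t + heatFlow (U.indicator fun y => max 0 (-w y s)) x (t - s) := by
  set f := U.indicator fun y => max 0 (-w y s)
  have hf₀ (y : E) : 0 ≤ f y := indicator_nonneg (fun _ _ => le_max_left _ _) y
  have hslice : ContinuousOn (fun y => w y s) (closure U) :=
    hcont.comp (f := fun y => (y, s)) (by fun_prop) fun y hy => ⟨hy, hs⟩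
  have hf : Continuous f := continuous_indicator_negPart hslice fun y hy => hbdry y hy s hs
  have hfc : HasCompactSupport f := hasCompactSupport_indicator hUb _
  refine nonneg_of_isHeatSupersolutionAt (A := closure U ×ˢ Icc s t)
    (u := fun x τ => w x τ + heatFlow f x (τ - s))
    (hUb.isCompact_closure.prod isCompact_Icc) ?_ (fun y τ hyτ => ?_) ⟨hx, hst, le_rfl⟩
  · refine (hcont.mono (prod_mono_right fun τ hτ => hs.trans_le hτ.1)).add ?_
    exact ((continuous_heatFlow hf hfc).comp
      (continuous_fst.prodMk (continuous_snd.sub continuous_const))).continuousOn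
  obtain ⟨hy, hsτ, hτt⟩ := hyτ
  have hτ : 0 < τ := hs.trans_le hsτ
  have hflow : 0 ≤ heatFlow f y (τ - s) := heatFlow_nonneg hf₀
  by_cases hyU : y ∈ U
  · obtain rfl | hsτ := hsτ.eq_or_lt
    · left
      have hfy : f y = max 0 (-w y s) := indicator_of_mem hyU _
      rw [sub_self, heatFlow_zero, hfy]
      linarith [le_max_right 0 (-w y s)]
    · refine .inr ⟨prod_mem_prod (mem_of_superset (hU.mem_nhds hyU) subset_closure)
        (Icc_mem_nhdsLE_of_mem ⟨hsτ, hτt⟩), ?_⟩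
      simpa only [one_mul] using (hw y hyU τ hτ).add_const_mul (c := 1)
        (hasHeatOpAt_heatFlow hf hfc y (sub_pos.2 hsτ)).comp_sub_const (by simp)
  · left
    linarith [hbdry y ⟨hy, fun h => hyU (interior_subset h)⟩ τ hτ]

lemma tendsto_integral_indicator_negPart (hU : IsOpen U) (hUb : Bornology.IsBounded U)
    (hcont : ContinuousOn (Function.uncurry w) (closure U ×ˢ Ioi 0))
    (hbdd : ∀ x ∈ U, ∀ t > 0, -M ≤ w x t)
    (hinit : ∀ x ∈ U, ∀ ε > 0, ∀ᶠ t in 𝓝[>] 0, -ε < w x t) :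
    Tendsto (fun t => ∫ x, U.indicator (fun y => max 0 (-w y t)) x) (𝓝[>] 0) (𝓝 0) := by
  suffices Tendsto (fun t => ∫ x in U, max 0 (-w x t)) (𝓝[>] 0) (𝓝 (∫ _ in U, (0 : ℝ))) by
    simpa [integral_indicator hU.measurableSet] using this
  refine tendsto_integral_filter_of_dominated_convergence (fun _ => max 0 M) ?_ ?_
    (integrableOn_const hUb.measure_lt_top.ne) (ae_restrict_of_forall_mem hU.measurableSet ?_)
  · filter_upwards [self_mem_nhdsWithin] with t ht
    have hslice : ContinuousOn (fun x => w x t) U :=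
      hcont.comp (f := fun x => (x, t)) (by fun_prop) fun x hx => ⟨subset_closure hx, ht⟩
    exact (continuousOn_const.sup hslice.neg).aestronglyMeasurable hU.measurableSet
  · filter_upwards [self_mem_nhdsWithin] with t ht
    refine ae_restrict_of_forall_mem hU.measurableSet fun x hx => ?_
    rw [Real.norm_of_nonneg (le_max_left _ _)]
    exact max_le_max le_rfl (neg_le.1 (hbdd x hx t ht))
  · refine fun x hx => Metric.tendsto_nhds.2 fun ε hε => ?_
    filter_upwards [hinit x hx ε hε] with t ht
    rw [dist_zero_right, Real.norm_of_nonneg (le_max_left _ _)]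
    exact max_lt hε (neg_lt.1 ht)

/-- Supersolutions need only be nonnegative initially in the pointwise sense; the `L¹-L^∞`
smoothing of `heatFlow` upgrades this to the uniform statement. -/
lemma nonneg_of_isHeatSupersolutionAt_of_eventually (hU : IsOpen U) (hUb : Bornology.IsBounded U)
    (hcont : ContinuousOn (Function.uncurry w) (closure U ×ˢ Ioi 0))
    (hw : ∀ x ∈ U, ∀ t > 0, IsHeatSupersolutionAt w x t)
    (hbdry : ∀ x ∈ frontier U, ∀ t > 0, 0 ≤ w x t)
    (hbdd : ∀ x ∈ U, ∀ t > 0, -M ≤ w x t)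
    (hinit : ∀ x ∈ U, ∀ ε > 0, ∀ᶠ t in 𝓝[>] 0, -ε < w x t)
    {x : E} (hx : x ∈ closure U) {t : ℝ} (ht : 0 < t) : 0 ≤ w x t := by
  have hlim : Tendsto (fun s => w x t + (4 * Real.pi * (t - s)) ^ (-(finrank ℝ E : ℝ) / 2) *
      ∫ y, U.indicator (fun y => max 0 (-w y s)) y) (𝓝[>] 0) (𝓝 (w x t)) := by
    have hpow : ContinuousAt (fun s => (4 * Real.pi * (t - s)) ^ (-(finrank ℝ E : ℝ) / 2)) 0 :=
      ContinuousAt.rpow_const (by fun_prop) (.inl (by rw [sub_zero]; positivity))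
    simpa using ((hpow.tendsto.mono_left nhdsWithin_le_nhds).mul
      (tendsto_integral_indicator_negPart hU hUb hcont hbdd hinit)).const_add (w x t)
  refine ge_of_tendsto hlim ?_
  filter_upwards [Ioo_mem_nhdsGT ht] with s hs
  have hslice : ContinuousOn (fun y => w y s) (closure U) :=
    hcont.comp (f := fun y => (y, s)) (by fun_prop) fun y hy => ⟨hy, hs.1⟩
  have hle := heatFlow_le (x := x) (continuous_indicator_negPart hslice
    fun y hy => hbdry y hy s hs.1) (hasCompactSupport_indicator hUb _)
    (indicator_nonneg fun _ _ => le_max_left _ _) (sub_pos.2 hs.2)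
  linarith [nonneg_add_heatFlow_negPart hU hUb hcont hw hbdry hs.1 hs.2.le hx]

end PointwiseInitialData

section StrongMaximumPrinciple

variable {E : Type*} [NormedAddCommGroup E] [InnerProductSpace ℝ E]

/-- A decaying bump on a ball of radius `ρ` whose centre moves from `b` with velocity `Y`. For a
large decay rate `k` it is a subsolution of the heat equation on the moving ball. -/
noncomputable def travelingBump (b Y : E) (ρ k : ℝ) (x : E) (t : ℝ) : ℝ :=
  Real.exp (-k * t) * (ρ ^ 2 - ‖x - (b + t • Y)‖ ^ 2) ^ 2

variable {b Y x e : E} {ρ k t : ℝ}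

lemma hasDerivAt_travelingBump :
    HasDerivAt (travelingBump b Y ρ k x)
      (Real.exp (-k * t) * (-k * (ρ ^ 2 - ‖x - (b + t • Y)‖ ^ 2) ^ 2 +
        4 * (ρ ^ 2 - ‖x - (b + t • Y)‖ ^ 2) * ⟪x - (b + t • Y), Y⟫)) t := by
  have hcenter : HasDerivAt (fun s : ℝ => x - (b + s • Y)) (-Y) t := by
    simpa using (((hasDerivAt_id t).smul_const Y).const_add b).const_sub x
  have hexp : HasDerivAt (fun s => Real.exp (-k * s)) (Real.exp (-k * t) * -k) t := by
    simpa using ((hasDerivAt_id t).const_mul (-k)).exp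
  refine (hexp.mul ((hcenter.norm_sq.const_sub (ρ ^ 2)).fun_pow 2)).congr_deriv ?_
  rw [inner_neg_right]
  ring

lemma travelingBump_center_pos (hρ : 0 < ρ) : 0 < travelingBump b Y ρ k (b + t • Y) t := by
  rw [travelingBump, sub_self, norm_zero, zero_pow two_ne_zero, sub_zero]
  positivity

lemma travelingBump_zero_le (hx : ‖x - b‖ ≤ ρ) : travelingBump b Y ρ k x 0 ≤ ρ ^ 4 := by
  rw [travelingBump, mul_zero, Real.exp_zero, one_mul, zero_smul, add_zero]
  nlinarith [pow_le_pow_left₀ (norm_nonneg _) hx 2, sq_nonneg ‖x - b‖, sq_nonneg ρ]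

variable [FiniteDimensional ℝ E]

lemma laplacian_travelingBump :
    Δ (fun y => travelingBump b Y ρ k y t) x = Real.exp (-k * t) *
      (8 * ‖x - (b + t • Y)‖ ^ 2 -
        4 * finrank ℝ E * (ρ ^ 2 - ‖x - (b + t • Y)‖ ^ 2)) := by
  have hφ : ContDiff ℝ 2 fun s => Real.exp (-k * t) * (ρ ^ 2 - s) ^ 2 := by fun_prop
  have hderiv : deriv (fun s => Real.exp (-k * t) * (ρ ^ 2 - s) ^ 2) =
      fun s => -2 * Real.exp (-k * t) * (ρ ^ 2 - s) := by
    ext s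
    have := ((((hasDerivAt_id s).const_sub (ρ ^ 2)).fun_pow 2).const_mul (Real.exp (-k * t))).deriv
    simp only [id] at this
    rw [this]
    ring
  have hderiv₂ (s : ℝ) : deriv (fun s => -2 * Real.exp (-k * t) * (ρ ^ 2 - s)) s =
      2 * Real.exp (-k * t) := by
    simp
  refine (laplacian_comp_norm_sub_sq (c := b + t • Y) hφ.contDiffAt).trans ?_
  rw [hderiv, hderiv₂]
  ring

lemma exists_hasHeatOpAt_travelingBump_nonpos (b Y : E) (hρ : 0 < ρ) :
    ∃ k, ∀ x t, ‖x - (b + t • Y)‖ ≤ ρ → ∃ a ≤ 0, HasHeatOpAt (travelingBump b Y ρ k) a x t := by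
  set N := 4 * ρ * ‖Y‖ + 4 * finrank ℝ E + 8
  refine ⟨N ^ 2 / (32 * ρ ^ 2), fun x t hx => ⟨_, ?_, ?_, hasDerivAt_travelingBump.differentiableAt,
    congrArg₂ _ hasDerivAt_travelingBump.deriv laplacian_travelingBump⟩⟩
  · set g := ρ ^ 2 - ‖x - (b + t • Y)‖ ^ 2 with hg
    have hg₀ : 0 ≤ g := sub_nonneg.2 (pow_le_pow_left₀ (norm_nonneg _) hx 2)
    have hinner : ⟪x - (b + t • Y), Y⟫ ≤ ρ * ‖Y‖ :=
      (real_inner_le_norm _ _).trans (mul_le_mul_of_nonneg_right hx (norm_nonneg Y))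
    -- The decay rate of the bump is chosen to make this quadratic in `g` a perfect square.
    have hsquare : 0 ≤ N ^ 2 / (32 * ρ ^ 2) * g ^ 2 - N * g + 8 * ρ ^ 2 := by
      have : N ^ 2 / (32 * ρ ^ 2) * g ^ 2 - N * g + 8 * ρ ^ 2 =
          8 * (N * g / (16 * ρ) - ρ) ^ 2 := by
        field_simp
        ring
      rw [this]
      positivity
    have hq : ‖x - (b + t • Y)‖ ^ 2 = ρ ^ 2 - g := by rw [hg]; ring
    rw [← mul_sub, hq]
    refine mul_nonpos_of_nonneg_of_nonpos (Real.exp_pos _).le ?_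
    nlinarith [mul_le_mul_of_nonneg_left hinner hg₀]
  · unfold travelingBump
    have : ContDiff ℝ 2 fun y : E => ‖y - (b + t • Y)‖ ^ 2 :=
      (contDiff_norm_sq ℝ).comp (contDiff_id.sub contDiff_const)
    exact (contDiff_const.mul ((contDiff_const.sub this).pow 2)).contDiffAt

variable {U : Set E} {w : E → ℝ → ℝ} {s : ℝ}

lemma pos_of_isHeatSupersolutionAt_of_tube_subset {K : Set E} (hK : IsCompact K)
    (hcont : ContinuousOn (Function.uncurry w) (K ×ˢ Icc s t))
    (hw : ∀ x ∈ K, ∀ τ ∈ Icc s t, IsHeatSupersolutionAt w x τ)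
    (hw₀ : ∀ x ∈ K, ∀ τ ∈ Icc s t, 0 ≤ w x τ) (hst : s ≤ t) (hρ : 0 < ρ)
    (htube : ∀ τ ∈ Icc s t, closedBall (b + (τ - s) • Y) ρ ⊆ K)
    (hpos : ∀ x ∈ closedBall b ρ, 0 < w x s) : 0 < w (b + (t - s) • Y) t := by
  have hbK : closedBall b ρ ⊆ K := by simpa using htube s (left_mem_Icc.2 hst)
  have hslice : ContinuousOn (fun x => w x s) (closedBall b ρ) :=
    hcont.comp (f := fun x => (x, s)) (by fun_prop) fun x hx => ⟨hbK hx, left_mem_Icc.2 hst⟩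
  obtain ⟨m, hm, hmin⟩ := (isCompact_closedBall b ρ).exists_forall_le' hslice hpos
  obtain ⟨k, hk⟩ := exists_hasHeatOpAt_travelingBump_nonpos b Y hρ
  set δ := m / ρ ^ 4
  have hδ₀ : 0 < δ := by positivity
  set A := {q : E × ℝ | ‖q.1 - (b + (q.2 - s) • Y)‖ ≤ ρ} ∩ univ ×ˢ Icc s t with hA
  have hAK : A ⊆ K ×ˢ Icc s t := fun q hq =>
    ⟨htube q.2 hq.2.2 (mem_closedBall_iff_norm.2 hq.1), hq.2.2⟩
  have hAc : IsCompact A := (hK.prod isCompact_Icc).of_isClosed_subset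
    ((isClosed_le (by fun_prop) (by fun_prop)).inter (isClosed_univ.prod isClosed_Icc)) hAK
  have hcenter : (b + (t - s) • Y, t) ∈ A := by simp [hA, hst, hρ.le]
  have hcomp := nonneg_of_isHeatSupersolutionAt hAc
    (u := fun x τ => w x τ + -δ * travelingBump b Y ρ k x (τ - s)) ?_ (fun x τ hxτ => ?_) hcenter
  · nlinarith [mul_pos hδ₀ (travelingBump_center_pos (b := b) (Y := Y) (k := k) (t := t - s) hρ)]
  · refine (hcont.mono hAK).add (Continuous.continuousOn ?_)
    unfold travelingBump
    fun_prop
  · obtain ⟨hxK, hτ⟩ := hAK hxτ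
    have hxρ : ‖x - (b + (τ - s) • Y)‖ ≤ ρ := hxτ.1
    obtain hxρ' | hxρ' := hxρ.eq_or_lt
    · left
      simpa [travelingBump, hxρ'] using hw₀ x hxK τ hτ
    obtain rfl | hsτ := hτ.1.eq_or_lt
    · left
      have hxb : ‖x - b‖ ≤ ρ := by simpa using hxρ
      have hδm : δ * ρ ^ 4 = m := div_mul_cancel₀ m (by positivity)
      rw [sub_self]
      nlinarith [hmin x (mem_closedBall_iff_norm.2 hxb),
        travelingBump_zero_le (Y := Y) (k := k) hxb]
    · obtain ⟨a, ha, hbump⟩ := hk x (τ - s) hxρ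
      exact .inr ⟨inter_mem (eventually_le_prod_nhdsLE (by fun_prop) (by fun_prop) hxρ')
        (prod_mem_prod univ_mem (Icc_mem_nhdsLE_of_mem ⟨hsτ, hτ.2⟩)),
        (hw x hxK τ hτ).add_const_mul hbump.comp_sub_const
          (mul_nonneg_of_nonpos_of_nonpos (neg_nonpos.2 hδ₀.le) ha)⟩

lemma pos_of_isHeatSupersolutionAt_of_segment_subset (hU : IsOpen U)
    (hcont : ContinuousOn (Function.uncurry w) (U ×ˢ Ioi 0))
    (hw : ∀ x ∈ U, ∀ t > 0, IsHeatSupersolutionAt w x t) (hw₀ : ∀ x ∈ U, ∀ t > 0, 0 ≤ w x t)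
    (hseg : segment ℝ b e ⊆ U) (hs : 0 < s) (hst : s < t) (hpos : 0 < w b s) : 0 < w e t := by
  have hIcc {τ : ℝ} (hτ : τ ∈ Icc s t) : 0 < τ := hs.trans_le hτ.1
  have hK : IsCompact (segment ℝ b e) := by
    rw [segment_eq_image']
    exact isCompact_Icc.image (by fun_prop)
  obtain ⟨r, hr, hrU⟩ := hK.exists_cthickening_subset_open hU hseg
  have hslice : ContinuousAt (fun x => w x s) b :=
    ContinuousAt.comp (f := fun x => (x, s)) (hcont.continuousAt
      (prod_mem_nhds (hU.mem_nhds (hseg (left_mem_segment ℝ b e))) (Ioi_mem_nhds hs)))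
      (by fun_prop)
  obtain ⟨r', hr', hball⟩ := Metric.nhds_basis_closedBall.mem_iff.1
    (hslice.eventually_const_lt hpos)
  have hend : b + (t - s) • (t - s)⁻¹ • (e - b) = e := by
    rw [smul_inv_smul₀ (sub_pos.2 hst).ne', add_sub_cancel]
  rw [← hend]
  refine pos_of_isHeatSupersolutionAt_of_tube_subset (K := cthickening r (segment ℝ b e))
    hK.cthickening
    (hcont.mono (prod_mono hrU fun τ => hIcc)) (fun x hx τ hτ => hw x (hrU hx) τ (hIcc hτ))
    (fun x hx τ hτ => hw₀ x (hrU hx) τ (hIcc hτ)) hst.le (lt_min hr hr') (fun τ hτ => ?_)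
    fun x hx => hball (closedBall_subset_closedBall (min_le_right _ _) hx)
  refine (closedBall_subset_closedBall (min_le_left r r')).trans
    (closedBall_subset_cthickening ?_ r)
  rw [segment_eq_image', smul_smul]
  have hts : 0 < t - s := sub_pos.2 hst
  exact mem_image_of_mem _ ⟨mul_nonneg (sub_nonneg.2 hτ.1) (inv_nonneg.2 hts.le),
    by rw [← div_eq_mul_inv, div_le_one hts]; linarith [hτ.2]⟩

lemma pos_of_isHeatSupersolutionAt (hU : IsOpen U) (hUc : IsPreconnected U)
    (hcont : ContinuousOn (Function.uncurry w) (U ×ˢ Ioi 0))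
    (hw : ∀ x ∈ U, ∀ t > 0, IsHeatSupersolutionAt w x t) (hw₀ : ∀ x ∈ U, ∀ t > 0, 0 ≤ w x t)
    (hb : b ∈ U) (he : e ∈ U) (hs : 0 < s) (hst : s < t) (hpos : 0 < w b s) : 0 < w e t := by
  let P (x y : E) : Prop := ∀ ⦃s t : ℝ⦄, 0 < s → s < t → 0 < w x s → 0 < w y t
  refine hUc.induction₂' P (fun x hx => ?_) (fun x y z _ _ _ hxy hyz s t hs hst hpos => ?_)
    hb he hs hst hpos
  · obtain ⟨r, hr, hball⟩ := Metric.isOpen_iff.1 hU x hx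
    filter_upwards [mem_nhdsWithin_of_mem_nhds (ball_mem_nhds x hr)] with y hy
    have hseg {a c : E} (ha : a ∈ ball x r) (hc : c ∈ ball x r) : segment ℝ a c ⊆ U :=
      ((convex_ball x r).segment_subset ha hc).trans hball
    have hlocal {a c : E} (ha : a ∈ ball x r) (hc : c ∈ ball x r) : P a c := fun s t hs hst hpos =>
      pos_of_isHeatSupersolutionAt_of_segment_subset hU hcont hw hw₀ (hseg ha hc) hs hst hpos
    exact ⟨hlocal (mem_ball_self hr) hy, hlocal hy (mem_ball_self hr)⟩
  · obtain ⟨τ, hsτ, hτt⟩ := exists_between hst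
    exact hyz (hs.trans hsτ) hτt (hxy hs hsτ hpos)

end StrongMaximumPrinciple

section HopfLemma

variable {E : Type*} [NormedAddCommGroup E]

/-- The barrier of the parabolic Hopf lemma: it vanishes on the paraboloid
`‖x - z‖ ^ 2 - η * t = r ^ 2` and, for large `α`, is a subsolution away from `z`. -/
noncomputable def hopfBarrier (z : E) (r α η : ℝ) (x : E) (t : ℝ) : ℝ :=
  Real.exp (-α * (‖x - z‖ ^ 2 - η * t)) - Real.exp (-α * r ^ 2)

variable {z p x : E} {r α η m t T d : ℝ} {w : E → ℝ → ℝ}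

lemma hopfBarrier_le_one (hα : 0 ≤ α) (ht : η * t ≤ 0) : hopfBarrier z r α η x t ≤ 1 := by
  have hexp : Real.exp (-α * (‖x - z‖ ^ 2 - η * t)) ≤ 1 :=
    Real.exp_le_one_iff.2 (by nlinarith [sq_nonneg ‖x - z‖])
  rw [hopfBarrier]
  linarith [Real.exp_pos (-α * r ^ 2)]

variable [InnerProductSpace ℝ E] [FiniteDimensional ℝ E]

lemma hasHeatOpAt_hopfBarrier : HasHeatOpAt (hopfBarrier z r α η)
    (Real.exp (-α * (‖x - z‖ ^ 2 - η * t)) * α * (η + 2 * finrank ℝ E - 4 * α * ‖x - z‖ ^ 2))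
    x t := by
  have htime : HasDerivAt (hopfBarrier z r α η x)
      (Real.exp (-α * (‖x - z‖ ^ 2 - η * t)) * (α * η)) t := by
    have hlin : HasDerivAt (fun s => -α * (‖x - z‖ ^ 2 - η * s)) (α * η) t := by
      simpa using (((hasDerivAt_id t).const_mul η).const_sub (‖x - z‖ ^ 2)).const_mul (-α)
    exact hlin.exp.sub_const _
  have hφ : ContDiff ℝ 2 fun s => Real.exp (-α * (s - η * t)) - Real.exp (-α * r ^ 2) := by
    fun_prop
  have hexp (c s : ℝ) : HasDerivAt (fun s => c * Real.exp (-α * (s - η * t)))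
      (-α * c * Real.exp (-α * (s - η * t))) s := by
    have hlin : HasDerivAt (fun s => -α * (s - η * t)) (-α) s := by
      simpa using ((hasDerivAt_id s).sub_const (η * t)).const_mul (-α)
    exact (hlin.exp.const_mul c).congr_deriv (by ring)
  have hderiv : deriv (fun s => Real.exp (-α * (s - η * t)) - Real.exp (-α * r ^ 2)) =
      fun s => -α * Real.exp (-α * (s - η * t)) := by
    ext s
    simpa using ((hexp 1 s).sub_const (Real.exp (-α * r ^ 2))).deriv
  refine ⟨?_, htime.differentiableAt, ?_⟩
  · exact (hφ.comp ((contDiff_id.sub contDiff_const).norm_sq ℝ)).contDiffAt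
  · rw [htime.deriv]
    unfold hopfBarrier
    rw [laplacian_comp_norm_sub_sq (c := z) hφ.contDiffAt, hderiv, (hexp (-α) _).deriv]
    ring

/-- The constant `η` is so large that the paraboloid through the sphere `‖x - z‖ = r` at time `T`
has shrunk into the ball `‖x - z‖ < r / 2` by time `T / 2`, so no initial data are needed. -/
lemma mul_exp_sub_exp_le_of_isHeatSupersolutionAt (hr : 0 < r) (hT : 0 ≤ T) (hη : 0 < η)
    (hα : 0 ≤ α) (hm : 0 ≤ m) (hηT : 2 * r ^ 2 ≤ η * T) (hαr : η + 2 * finrank ℝ E ≤ α * r ^ 2)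
    (hcont : ContinuousOn (Function.uncurry w) (closedBall z r ×ˢ Icc (T / 2) T))
    (hw : ∀ x ∈ ball z r, ∀ t ∈ Icc (T / 2) T, IsHeatSupersolutionAt w x t)
    (hw₀ : ∀ x ∈ closedBall z r, ∀ t ∈ Icc (T / 2) T, 0 ≤ w x t)
    (hmin : ∀ x ∈ sphere z (r / 2), ∀ t ∈ Icc (T / 2) T, m ≤ w x t)
    (hx : x ∈ closedBall z r) (hxr : r / 2 ≤ ‖x - z‖) :
    m * (Real.exp (-α * ‖x - z‖ ^ 2) - Real.exp (-α * r ^ 2)) ≤ w x T := by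
  set A := closedBall z r ×ˢ Icc (T / 2) T ∩
    ({q | r / 2 ≤ ‖q.1 - z‖} ∩ {q | ‖q.1 - z‖ ^ 2 - η * (q.2 - T) ≤ r ^ 2}) with hA
  have hAc : IsCompact A := ((isCompact_closedBall z r).prod isCompact_Icc).inter_right
    ((isClosed_le (by fun_prop) (by fun_prop)).inter (isClosed_le (by fun_prop) (by fun_prop)))
  have hxT : (x, T) ∈ A := by
    have : ‖x - z‖ ≤ r := mem_closedBall_iff_norm.1 hx
    simpa [hA, hx, hxr, hT] using pow_le_pow_left₀ (norm_nonneg _) this 2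
  have hcomp := nonneg_of_isHeatSupersolutionAt hAc
    (u := fun x t => w x t + -m * hopfBarrier z r α η x (t - T)) ?_ (fun y t hyt => ?_) hxT
  · simpa [hopfBarrier] using hcomp
  · refine (hcont.mono inter_subset_left).add (Continuous.continuousOn ?_)
    unfold hopfBarrier
    fun_prop
  · obtain ⟨⟨hyr, ht⟩, hy, hyt⟩ := hyt
    have htT : η * (t - T) ≤ 0 := mul_nonpos_of_nonneg_of_nonpos hη.le (sub_nonpos.2 ht.2)
    obtain hy | hy := (show r / 2 ≤ ‖y - z‖ from hy).eq_or_lt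
    · left
      nlinarith [hmin y (mem_sphere_iff_norm.2 hy.symm) t ht,
        hopfBarrier_le_one (x := y) (z := z) (r := r) hα htT]
    obtain hyt | hyt := (show ‖y - z‖ ^ 2 - η * (t - T) ≤ r ^ 2 from hyt).eq_or_lt
    · left
      simpa [hopfBarrier, hyt] using hw₀ y hyr t ht
    · right
      have hyball : y ∈ ball z r :=
        mem_ball_iff_norm.2 (lt_of_pow_lt_pow_left₀ 2 hr.le (by linarith))
      have ht' : T / 2 < t := lt_of_mul_lt_mul_left (by nlinarith [sq_nonneg ‖y - z‖]) hη.le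
      refine ⟨inter_mem (prod_mem_prod (closedBall_mem_nhds_of_mem hyball)
        (Icc_mem_nhdsLE_of_mem ⟨ht', ht.2⟩)) (inter_mem
        (eventually_le_prod_nhdsLE (by fun_prop) (by fun_prop) hy)
        (eventually_le_prod_nhdsLE (by fun_prop) (by fun_prop) hyt)),
        (hw y hyball t ht).add_const_mul hasHeatOpAt_hopfBarrier.comp_sub_const
        (mul_nonneg_of_nonpos_of_nonpos (neg_nonpos.2 hm)
          (mul_nonpos_of_nonneg_of_nonpos (by positivity) ?_))⟩
      have := mul_le_mul_of_nonneg_left (pow_le_pow_left₀ (half_pos hr).le hy.le 2) hα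
      linarith

lemma exists_mul_exp_sub_exp_le (hr : 0 < r) (hT : 0 < T)
    (hcont : ContinuousOn (Function.uncurry w) (closedBall z r ×ˢ Ioi 0))
    (hw : ∀ x ∈ ball z r, ∀ t > 0, IsHeatSupersolutionAt w x t)
    (hpos : ∀ x ∈ ball z r, ∀ t > 0, 0 < w x t)
    (hw₀ : ∀ x ∈ closedBall z r, ∀ t > 0, 0 ≤ w x t) :
    ∃ α > 0, ∃ m > 0, ∀ x ∈ closedBall z r, r / 2 ≤ ‖x - z‖ →
      m * (Real.exp (-α * ‖x - z‖ ^ 2) - Real.exp (-α * r ^ 2)) ≤ w x T := by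
  have hIcc {t : ℝ} (ht : t ∈ Icc (T / 2) T) : 0 < t := (half_pos hT).trans_le ht.1
  have hsphere : sphere z (r / 2) ⊆ ball z r :=
    sphere_subset_closedBall.trans (closedBall_subset_ball (half_lt_self hr))
  have hcont' : ContinuousOn (Function.uncurry w) (closedBall z r ×ˢ Icc (T / 2) T) :=
    hcont.mono (prod_mono_right fun _ => hIcc)
  obtain ⟨m, hm, hmin⟩ := ((isCompact_sphere z (r / 2)).prod isCompact_Icc).exists_forall_le'
    (hcont'.mono (prod_mono_left (hsphere.trans ball_subset_closedBall)))
    fun q hq => hpos q.1 (hsphere hq.1) q.2 (hIcc hq.2)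
  have hη : 0 < 2 * r ^ 2 / T := by positivity
  refine ⟨(2 * r ^ 2 / T + 2 * finrank ℝ E) / r ^ 2, by positivity, m, hm, fun x hx hxr =>
    mul_exp_sub_exp_le_of_isHeatSupersolutionAt hr hT.le hη (by positivity) hm.le
      (div_mul_cancel₀ _ hT.ne').ge (div_mul_cancel₀ _ (by positivity)).ge hcont'
      (fun x hx t ht => hw x hx t (hIcc ht)) (fun x hx t ht => hw₀ x hx t (hIcc ht))
      (fun x hx t ht => hmin (x, t) ⟨hx, ht⟩) hx hxr⟩

lemma hasDerivAt_pos_of_isHeatSupersolutionAt (hr : 0 < r) (hT : 0 < T) (hp : p ∈ sphere z r)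
    (hcont : ContinuousOn (Function.uncurry w) (closedBall z r ×ˢ Ioi 0))
    (hw : ∀ x ∈ ball z r, ∀ t > 0, IsHeatSupersolutionAt w x t)
    (hpos : ∀ x ∈ ball z r, ∀ t > 0, 0 < w x t)
    (hw₀ : ∀ x ∈ closedBall z r, ∀ t > 0, 0 ≤ w x t) (hwp : w p T = 0)
    (hderiv : HasDerivAt (fun s : ℝ => w (p + s • (z - p)) T) d 0) : 0 < d := by
  obtain ⟨α, hα, m, hm, hle⟩ := exists_mul_exp_sub_exp_le hr hT hcont hw hpos hw₀
  have hnorm (s : ℝ) : ‖p + s • (z - p) - z‖ ^ 2 = ((1 - s) * r) ^ 2 := by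
    rw [show p + s • (z - p) - z = (1 - s) • (p - z) by module, norm_smul, mul_pow,
      ← mem_sphere_iff_norm.1 hp, mul_pow, Real.norm_eq_abs, sq_abs]
  have hbarrier : HasDerivAt
      (fun s : ℝ => m * (Real.exp (-α * ((1 - s) * r) ^ 2) - Real.exp (-α * r ^ 2)))
      (2 * m * α * r ^ 2 * Real.exp (-α * r ^ 2)) 0 := by
    have := (((((hasDerivAt_id (0 : ℝ)).const_sub 1).mul_const r).fun_pow 2).const_mul (-α)).exp
    refine ((this.sub_const (Real.exp (-α * r ^ 2))).const_mul m).congr_deriv ?_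
    simp only [id_eq, sub_zero, one_mul, Nat.cast_ofNat, Nat.add_one_sub_one, pow_one]
    ring
  have hmin : IsLocalMinOn (fun s => w (p + s • (z - p)) T -
      m * (Real.exp (-α * ((1 - s) * r) ^ 2) - Real.exp (-α * r ^ 2))) (Ici 0) 0 := by
    filter_upwards [Icc_mem_nhdsGE (show (0 : ℝ) < 1 / 2 by norm_num)] with s hs
    have hnorm' : ‖p + s • (z - p) - z‖ = (1 - s) * r :=
      (pow_left_inj₀ (norm_nonneg _) (mul_nonneg (by linarith [hs.2]) hr.le) two_ne_zero).1
        (hnorm s)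
    have := hle (p + s • (z - p)) (mem_closedBall_iff_norm.2 (by rw [hnorm']; nlinarith [hs.1]))
      (by rw [hnorm']; nlinarith [hs.2])
    rw [hnorm] at this
    simpa [hwp] using this
  have := hasDerivAt_nonneg_of_isLocalMinOn_Ici (hderiv.sub hbarrier) hmin
  have : 0 < 2 * m * α * r ^ 2 * Real.exp (-α * r ^ 2) := by positivity
  linarith

end HopfLemma

section MovingPlane

variable {E : Type*} [NormedAddCommGroup E] [InnerProductSpace ℝ E]

/-- The part of `Ω` on the side of the hyperplane through `p` normal to `ν` to which `ν` points. -/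
def hyperplaneCap (Ω : Set E) (p ν : E) : Set E :=
  Ω ∩ {x | 0 < ⟪ν, x - p⟫}

variable {Ω : Set E} {h : E → ℝ → ℝ} {p ν x : E} {t : ℝ}

lemma isOpen_hyperplaneCap (hΩ : IsOpen Ω) : IsOpen (hyperplaneCap Ω p ν) :=
  hΩ.inter (isOpen_lt (by fun_prop) (by fun_prop))

lemma inner_nonneg_of_mem_closure_hyperplaneCap (hx : x ∈ closure (hyperplaneCap Ω p ν)) :
    0 ≤ ⟪ν, x - p⟫ :=
  closure_minimal (t := {x | 0 ≤ ⟪ν, x - p⟫}) (fun y hy => (show 0 < ⟪ν, y - p⟫ from hy.2).le)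
    (isClosed_le (by fun_prop) (by fun_prop)) hx

lemma mem_frontier_or_inner_eq_zero_of_mem_frontier_hyperplaneCap (hΩ : IsOpen Ω)
    (hx : x ∈ frontier (hyperplaneCap Ω p ν)) : x ∈ frontier Ω ∨ ⟪ν, x - p⟫ = 0 := by
  rw [(isOpen_hyperplaneCap hΩ).frontier_eq] at hx
  rw [hΩ.frontier_eq, or_iff_not_imp_right]
  exact fun hne => ⟨closure_mono inter_subset_left hx.1, fun hxΩ =>
    hx.2 ⟨hxΩ, (inner_nonneg_of_mem_closure_hyperplaneCap hx.1).lt_of_ne' hne⟩⟩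

lemma ball_subset_hyperplaneCap (hν : ‖ν‖ = 1) {r : ℝ} (hr : ball p (2 * r) ⊆ Ω) :
    ball (p + r • ν) r ⊆ hyperplaneCap Ω p ν := by
  intro x hx
  have hr₀ : 0 < r := pos_of_mem_ball hx
  rw [mem_ball_iff_norm] at hx
  have hsplit : x - p = (x - (p + r • ν)) + r • ν := by module
  refine ⟨hr (mem_ball_iff_norm.2 ?_), ?_⟩
  · calc ‖x - p‖ ≤ ‖x - (p + r • ν)‖ + ‖r • ν‖ := hsplit ▸ norm_add_le _ _
      _ < 2 * r := by rw [norm_smul, hν, Real.norm_of_nonneg hr₀.le]; linarith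
  · have hinner := neg_le_of_abs_le (abs_real_inner_le_norm ν (x - (p + r • ν)))
    rw [hν, one_mul] at hinner
    rw [mem_ofPred_eq, hsplit, inner_add_right, inner_smul_right, real_inner_self_eq_norm_sq, hν]
    linarith

variable [FiniteDimensional ℝ E]

/-- The reflection across the hyperplane through `p` normal to `ν`. -/
noncomputable def hyperplaneReflection (p ν : E) : E ≃ᵃⁱ[ℝ] E :=
  EuclideanGeometry.reflection (AffineSubspace.mk' p (ℝ ∙ ν)ᗮ)

/-- The excess of the reflected function over `h`, which the moving plane argument shows to be
positive on the cap. -/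
noncomputable def reflectionExcess (h : E → ℝ → ℝ) (p ν x : E) (t : ℝ) : ℝ :=
  h (hyperplaneReflection p ν x) t - h x t

lemma hyperplaneReflection_apply (hν : ‖ν‖ = 1) :
    hyperplaneReflection p ν x = x - (2 * ⟪ν, x - p⟫) • ν := by
  rw [hyperplaneReflection, EuclideanGeometry.reflection_apply_of_mem _ _
    (AffineSubspace.self_mem_mk' p (ℝ ∙ ν)ᗮ)]
  simp only [AffineSubspace.direction_mk', vsub_eq_sub, vadd_eq_add]
  rw [Submodule.reflection_orthogonal_apply, Submodule.reflection_singleton_apply, hν]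
  simp only [Real.ringHom_apply, one_pow, div_one, neg_sub]
  module

lemma hyperplaneReflection_eq_self (hν : ‖ν‖ = 1) (hx : ⟪ν, x - p⟫ = 0) :
    hyperplaneReflection p ν x = x := by
  simp [hyperplaneReflection_apply hν, hx]

lemma hyperplaneReflection_add_smul (hν : ‖ν‖ = 1) (s : ℝ) :
    hyperplaneReflection p ν (p + s • ν) = p - s • ν := by
  rw [hyperplaneReflection_apply hν, add_sub_cancel_left, inner_smul_right,
    real_inner_self_eq_norm_sq, hν]
  module

/-- The temperature `h` of a conductor `Ω` with boundary temperature `0` and initial temperature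
`1`, the latter being attained pointwise in `Ω`. -/
structure IsGroundedHeatFlow (Ω : Set E) (h : E → ℝ → ℝ) : Prop where
  continuousOn : ContinuousOn (Function.uncurry h) (closure Ω ×ˢ Ioi 0)
  hasHeatOpAt : ∀ x ∈ Ω, ∀ t > 0, HasHeatOpAt h 0 x t
  eq_zero : ∀ x ∈ frontier Ω, ∀ t > 0, h x t = 0
  mem_Icc : ∀ x ∈ closure Ω, ∀ t > 0, h x t ∈ Icc 0 1
  tendsto_one : ∀ x ∈ Ω, Tendsto (h x) (𝓝[>] 0) (𝓝 1)

namespace IsGroundedHeatFlow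

variable (hh : IsGroundedHeatFlow Ω h) (hΩ : IsOpen Ω) (hν : ‖ν‖ = 1)
  (hmaps : MapsTo (hyperplaneReflection p ν) (hyperplaneCap Ω p ν) Ω)
include hh hmaps

lemma continuousOn_reflectionExcess : ContinuousOn (Function.uncurry (reflectionExcess h p ν))
    (closure (hyperplaneCap Ω p ν) ×ˢ Ioi 0) := by
  have hσ := (hyperplaneReflection p ν).continuous
  refine ContinuousOn.sub (hh.continuousOn.comp
    (f := fun q : E × ℝ => (hyperplaneReflection p ν q.1, q.2))
    (by fun_prop) fun q hq => ⟨hmaps.closure hσ hq.1, hq.2⟩) ?_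
  exact hh.continuousOn.mono (prod_mono_left (closure_mono inter_subset_left))

lemma isHeatSupersolutionAt_reflectionExcess (hx : x ∈ hyperplaneCap Ω p ν) (ht : 0 < t) :
    IsHeatSupersolutionAt (reflectionExcess h p ν) x t := by
  have hop := ((hh.hasHeatOpAt _ (hmaps hx) t ht).comp_affineIsometryEquiv).add_const_mul
    (hh.hasHeatOpAt x hx.1 t ht) (-1)
  unfold reflectionExcess
  simpa [sub_eq_add_neg] using hop.isHeatSupersolutionAt (by simp)

include hΩ hν

lemma reflectionExcess_nonneg (hb : Bornology.IsBounded Ω)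
    (hx : x ∈ closure (hyperplaneCap Ω p ν)) (ht : 0 < t) : 0 ≤ reflectionExcess h p ν x t := by
  have hσ := hmaps.closure (hyperplaneReflection p ν).continuous
  borelize E
  refine nonneg_of_isHeatSupersolutionAt_of_eventually (M := 1) (isOpen_hyperplaneCap hΩ)
    (hb.subset inter_subset_left) (hh.continuousOn_reflectionExcess hmaps)
    (fun x hx t ht => hh.isHeatSupersolutionAt_reflectionExcess hmaps hx ht)
    (fun x hx t ht => ?_) (fun x hx t ht => ?_) (fun x hx ε hε => ?_) hx ht
  · rw [reflectionExcess]
    obtain hxΩ | hxν := mem_frontier_or_inner_eq_zero_of_mem_frontier_hyperplaneCap hΩ hx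
    · rw [hh.eq_zero x hxΩ t ht, sub_zero]
      exact (hh.mem_Icc _ (hσ (frontier_subset_closure hx)) t ht).1
    · rw [hyperplaneReflection_eq_self hν hxν, sub_self]
  · rw [reflectionExcess]
    linarith [(hh.mem_Icc _ (subset_closure (hmaps hx)) t ht).1,
      (hh.mem_Icc x (subset_closure hx.1) t ht).2]
  · have hlim := (hh.tendsto_one _ (hmaps hx)).sub (hh.tendsto_one x hx.1)
    rw [sub_self] at hlim
    exact hlim.eventually_const_lt (neg_lt_zero.2 hε)

lemma reflectionExcess_pos (hb : Bornology.IsBounded Ω)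
    (hconn : IsPreconnected (hyperplaneCap Ω p ν))
    (hexit : ∃ b ∈ frontier Ω, 0 < ⟪ν, b - p⟫ ∧ hyperplaneReflection p ν b ∈ Ω)
    (hx : x ∈ hyperplaneCap Ω p ν) (ht : 0 < t) : 0 < reflectionExcess h p ν x t := by
  obtain ⟨b, hbΩ, hbν, hσb⟩ := hexit
  obtain ⟨s, hs, hst, hspos⟩ : ∃ s, 0 < s ∧ s < t ∧ 0 < h (hyperplaneReflection p ν b) s := by
    have := ((hh.tendsto_one _ hσb).eventually_const_lt one_pos).and (Ioo_mem_nhdsGT ht)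
    obtain ⟨s, hpos, hs, hst⟩ := this.exists
    exact ⟨s, hs, hst, hpos⟩
  have hbcap : b ∈ closure (hyperplaneCap Ω p ν) := by
    have hopen : IsOpen {x | 0 < ⟪ν, x - p⟫} := isOpen_lt (by fun_prop) (by fun_prop)
    rw [hyperplaneCap, inter_comm]
    exact hopen.inter_closure ⟨hbν, frontier_subset_closure hbΩ⟩
  have hbpos : 0 < reflectionExcess h p ν b s := by
    rwa [reflectionExcess, hh.eq_zero b hbΩ s hs, sub_zero]
  have hcont := hh.continuousOn_reflectionExcess hmaps
  have hslice : ContinuousWithinAt (fun y => reflectionExcess h p ν y s)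
      (hyperplaneCap Ω p ν) b :=
    ((hcont.comp (f := fun y => (y, s)) (by fun_prop) fun y hy => ⟨hy, hs⟩) b hbcap).mono
      subset_closure
  have := mem_closure_iff_nhdsWithin_neBot.1 hbcap
  obtain ⟨y, hypos, hy⟩ :=
    ((hslice.eventually_const_lt hbpos).and self_mem_nhdsWithin).exists
  exact pos_of_isHeatSupersolutionAt (isOpen_hyperplaneCap hΩ) hconn
    (hcont.mono (prod_mono_left subset_closure))
    (fun x hx t ht => hh.isHeatSupersolutionAt_reflectionExcess hmaps hx ht)
    (fun x hx t ht => hh.reflectionExcess_nonneg hΩ hν hmaps hb (subset_closure hx) ht)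
    hy hx hs hst hypos

lemma fderiv_apply_neg (hb : Bornology.IsBounded Ω)
    (hconn : IsPreconnected (hyperplaneCap Ω p ν))
    (hexit : ∃ b ∈ frontier Ω, 0 < ⟪ν, b - p⟫ ∧ hyperplaneReflection p ν b ∈ Ω)
    (hp : p ∈ Ω) (ht : 0 < t) : fderiv ℝ (fun y => h y t) p ν < 0 := by
  obtain ⟨R, hR, hball⟩ := Metric.isOpen_iff.1 hΩ p hp
  have hr : 0 < R / 2 := half_pos hR
  have hsub : ball (p + (R / 2) • ν) (R / 2) ⊆ hyperplaneCap Ω p ν :=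
    ball_subset_hyperplaneCap hν (by rwa [mul_div_cancel₀ R two_ne_zero])
  have hsub' : closedBall (p + (R / 2) • ν) (R / 2) ⊆ closure (hyperplaneCap Ω p ν) :=
    closure_ball (p + (R / 2) • ν) hr.ne' ▸ closure_mono hsub
  have hderiv : HasDerivAt (fun s : ℝ => reflectionExcess h p ν (p + s • (p + (R / 2) • ν - p)) t)
      (-R * fderiv ℝ (fun y => h y t) p ν) 0 := by
    have hline (c : ℝ) : HasDerivAt (fun s : ℝ => h (p + s • c • ν) t)
        (c * fderiv ℝ (fun y => h y t) p ν) 0 := by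
      have hdiff := (hh.hasHeatOpAt p hp t ht).contDiffAt.differentiableAt two_ne_zero
      rw [← smul_eq_mul, ← map_smul]
      exact hdiff.hasFDerivAt.hasLineDerivAt (c • ν)
    have hσ (s : ℝ) : hyperplaneReflection p ν (p + s • (R / 2) • ν) = p + s • (-(R / 2)) • ν := by
      rw [smul_smul, hyperplaneReflection_add_smul hν]
      module
    unfold reflectionExcess
    simp only [add_sub_cancel_left, hσ]
    exact ((hline (-(R / 2))).sub (hline (R / 2))).congr_deriv (by ring)
  have := hasDerivAt_pos_of_isHeatSupersolutionAt hr ht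
    (by simp [norm_smul, hν, abs_of_pos hR])
    ((hh.continuousOn_reflectionExcess hmaps).mono (prod_mono_left hsub'))
    (fun x hx t ht => hh.isHeatSupersolutionAt_reflectionExcess hmaps (hsub hx) ht)
    (fun x hx t ht => hh.reflectionExcess_pos hΩ hν hmaps hb hconn hexit (hsub hx) ht)
    (fun x hx t ht => hh.reflectionExcess_nonneg hΩ hν hmaps hb (hsub' hx) ht)
    (by simp [reflectionExcess, hyperplaneReflection_eq_self hν]) hderiv
  nlinarith

end IsGroundedHeatFlow

end MovingPlane

section Plane

open Complex ComplexConjugate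

lemma fderiv_comp_equivRealProdCLM_apply (f : ℝ × ℝ → ℝ) (z v : ℂ) :
    fderiv ℝ (fun w => f (equivRealProdCLM w)) z v =
      fderiv ℝ f (equivRealProdCLM z) (equivRealProdCLM v) :=
  DFunLike.congr_fun (equivRealProdCLM.comp_right_fderiv (f := f)) v

lemma laplacian_comp_equivRealProdCLM {f : ℝ × ℝ → ℝ} {z : ℂ}
    (hf : ContDiffAt ℝ 2 f (equivRealProdCLM z)) :
    Δ (f ∘ equivRealProdCLM) z = lap2 f (equivRealProdCLM z) := by
  have hcomp : ContDiffAt ℝ 2 (f ∘ equivRealProdCLM) z :=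
    hf.comp z equivRealProdCLM.contDiff.contDiffAt
  have hsecond (v : ℂ) : fderiv ℝ (fun w => fderiv ℝ (f ∘ equivRealProdCLM) w v) z v =
      fderiv ℝ (fun y => fderiv ℝ f y (equivRealProdCLM v)) (equivRealProdCLM z)
        (equivRealProdCLM v) := by
    simp only [Function.comp_def, fderiv_comp_equivRealProdCLM_apply f]
    exact fderiv_comp_equivRealProdCLM_apply (fun y => fderiv ℝ f y (equivRealProdCLM v)) z v
  simp [laplacian_eq_sum_fderiv_fderiv orthonormalBasisOneI hcomp, hsecond, lap2]

lemma isGroundedHeatFlow_comp_equivRealProdCLM {U : Set (ℝ × ℝ)} {h : ℝ × ℝ → ℝ → ℝ}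
    (hU : IsOpen U) (hcont : ContinuousOn (Function.uncurry h) (closure U ×ˢ Ioi 0))
    (hspace : ∀ t > 0, ContDiffOn ℝ 2 (fun x => h x t) U)
    (htime : ∀ x ∈ U, DifferentiableOn ℝ (h x) (Ioi 0))
    (hheat : ∀ x ∈ U, ∀ t > 0, deriv (h x) t = lap2 (fun y => h y t) x)
    (hfrontier : ∀ x ∈ frontier U, ∀ t > 0, h x t = 0)
    (hbound : ∀ x ∈ closure U, ∀ t > 0, h x t ∈ Icc 0 1)
    (hinit : ∀ x ∈ U, Tendsto (h x) (𝓝[>] 0) (𝓝 1)) :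
    IsGroundedHeatFlow (equivRealProdCLM ⁻¹' U) fun z => h (equivRealProdCLM z) where
  continuousOn := by
    rw [← equivRealProdCLM.preimage_closure]
    exact hcont.comp (f := fun q : ℂ × ℝ => (equivRealProdCLM q.1, q.2)) (by fun_prop)
      fun q hq => hq
  hasHeatOpAt z hz t ht := by
    have hdiff : ContDiffAt ℝ 2 (fun x => h x t) (equivRealProdCLM z) :=
      (hspace t ht).contDiffAt (hU.mem_nhds hz)
    refine ⟨hdiff.comp z equivRealProdCLM.contDiff.contDiffAt,
      (htime _ hz).differentiableAt (Ioi_mem_nhds ht), ?_⟩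
    rw [hheat _ hz t ht, sub_eq_zero]
    exact (laplacian_comp_equivRealProdCLM hdiff).symm
  eq_zero z hz := by
    replace hz : z ∈ equivRealProdCLM ⁻¹' frontier U :=
      equivRealProdCLM.toHomeomorph.preimage_frontier U ▸ hz
    exact hfrontier _ hz
  mem_Icc z hz := by
    rw [← equivRealProdCLM.preimage_closure] at hz
    exact hbound _ hz
  tendsto_one z hz := hinit _ hz

/-- The half-disk `D⁺`, inside `ℂ` because `ℝ × ℝ` carries the sup norm. -/
def halfDisk : Set ℂ :=
  ball 0 1 ∩ {z | 0 < z.re}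

lemma isOpen_halfDisk : IsOpen halfDisk :=
  isOpen_ball.inter (isOpen_lt continuous_const continuous_re)

lemma isBounded_halfDisk : Bornology.IsBounded halfDisk :=
  isBounded_ball.subset inter_subset_left

lemma preimage_equivRealProdCLM_eq_halfDisk :
    equivRealProdCLM ⁻¹' {p : ℝ × ℝ | p.1 ^ 2 + p.2 ^ 2 < 1 ∧ 0 < p.1} = halfDisk := by
  ext z
  simp [halfDisk, ← sq_lt_one_iff₀ (norm_nonneg z), Complex.sq_norm, normSq_apply, ← pow_two]

lemma mem_frontier_halfDisk {z : ℂ} (hz : ‖z‖ = 1) (hre : 0 < z.re) : z ∈ frontier halfDisk := by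
  rw [isOpen_halfDisk.frontier_eq]
  refine ⟨?_, fun hmem => (mem_ball_zero_iff.1 hmem.1).ne hz⟩
  rw [halfDisk, inter_comm]
  refine (isOpen_lt continuous_const continuous_re).inter_closure ⟨hre, ?_⟩
  rw [closure_ball 0 one_ne_zero]
  exact mem_closedBall_zero_iff.2 hz.le

lemma complex_inner_one_left (z : ℂ) : ⟪1, z⟫ = z.re := by
  simp [Complex.inner]

lemma hyperplaneReflection_one_apply (p z : ℂ) :
    hyperplaneReflection p 1 z = 2 * p.re - conj z := by
  rw [hyperplaneReflection_apply norm_one, complex_inner_one_left, real_smul, sub_re]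
  have hconj : z + conj z = 2 * z.re := by simpa using add_conj z
  push_cast
  linear_combination hconj

lemma hyperplaneCap_halfDisk {p : ℂ} (hp : 0 ≤ p.re) :
    hyperplaneCap halfDisk p 1 = ball 0 1 ∩ {z | p.re < z.re} := by
  ext z
  rw [hyperplaneCap, halfDisk, inter_assoc]
  refine and_congr_right fun _ => ?_
  rw [mem_inter_iff, mem_ofPred_eq, mem_ofPred_eq, complex_inner_one_left, sub_re, sub_pos]
  exact and_iff_right_of_imp hp.trans_lt

lemma isPreconnected_hyperplaneCap_halfDisk {p : ℂ} (hp : 0 ≤ p.re) :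
    IsPreconnected (hyperplaneCap halfDisk p 1) := by
  rw [hyperplaneCap_halfDisk hp]
  exact ((convex_ball 0 1).inter (convex_halfSpace_re_gt p.re)).isPreconnected

lemma hyperplaneReflection_mem_halfDisk {p z : ℂ} (hp : 1 / 2 ≤ p.re) (hz : ‖z‖ ≤ 1)
    (hpz : p.re < z.re) (hz₁ : z.re < 1) : hyperplaneReflection p 1 z ∈ halfDisk := by
  rw [hyperplaneReflection_one_apply]
  refine ⟨?_, ?_⟩
  · rw [mem_ball_zero_iff, ← sq_lt_one_iff₀ (norm_nonneg _), Complex.sq_norm, normSq_apply]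
    have hz_sq : z.re * z.re + z.im * z.im ≤ 1 := by
      rw [← normSq_apply, ← Complex.sq_norm]
      exact pow_le_one₀ (norm_nonneg z) hz
    have hre : (2 * p.re - conj z : ℂ).re = 2 * p.re - z.re := by simp
    have him : (2 * p.re - conj z : ℂ).im = z.im := by simp
    rw [hre, him]
    nlinarith
  · simpa using show z.re < 2 * p.re by linarith

lemma mapsTo_hyperplaneReflection_halfDisk {p : ℂ} (hp : 1 / 2 ≤ p.re) :
    MapsTo (hyperplaneReflection p 1) (hyperplaneCap halfDisk p 1) halfDisk := by
  rw [hyperplaneCap_halfDisk (by linarith)]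
  rintro z ⟨hz, hpz⟩
  rw [mem_ball_zero_iff] at hz
  exact hyperplaneReflection_mem_halfDisk hp hz.le hpz ((re_le_norm z).trans_lt hz)

lemma exists_mem_frontier_halfDisk_hyperplaneReflection_mem {p : ℂ} (hp : 1 / 2 ≤ p.re)
    (hp₁ : p.re < 1) :
    ∃ b ∈ frontier halfDisk, 0 < ⟪1, b - p⟫ ∧ hyperplaneReflection p 1 b ∈ halfDisk := by
  obtain ⟨c, hpc, hc⟩ := exists_between hp₁
  have hnorm : ‖(⟨c, √(1 - c ^ 2)⟩ : ℂ)‖ = 1 := by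
    rw [norm_eq_sqrt_sq_add_sq, Real.sq_sqrt (by nlinarith)]
    simp
  refine ⟨⟨c, √(1 - c ^ 2)⟩, mem_frontier_halfDisk hnorm (by grind), ?_,
    hyperplaneReflection_mem_halfDisk hp hnorm.le hpc hc⟩
  rwa [complex_inner_one_left, sub_re, sub_pos]

lemma IsGroundedHeatFlow.fderiv_one_neg {h : ℂ → ℝ → ℝ} {p : ℂ} {t : ℝ}
    (hh : IsGroundedHeatFlow halfDisk h) (hp : p ∈ halfDisk) (hre : 1 / 2 ≤ p.re) (ht : 0 < t) :
    fderiv ℝ (fun z => h z t) p 1 < 0 :=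
  hh.fderiv_apply_neg isOpen_halfDisk norm_one (mapsTo_hyperplaneReflection_halfDisk hre)
    isBounded_halfDisk (isPreconnected_hyperplaneCap_halfDisk (by linarith))
    (exists_mem_frontier_halfDisk_hyperplaneReflection_mem hre
      ((re_le_norm p).trans_lt (mem_ball_zero_iff.1 hp.1))) hp ht

end Plane

theorem half_disk_hot_spot_moves_general (Dp : Set (ℝ × ℝ))
    (hDp : Dp = {p : ℝ × ℝ | p.1 ^ 2 + p.2 ^ 2 < 1 ∧ 0 < p.1}) (h : ℝ × ℝ → ℝ → ℝ)
    (hcont : ContinuousOn (Function.uncurry h) (closure Dp ×ˢ Ioi 0))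
    (hspace : ∀ t > 0, ContDiffOn ℝ 2 (fun x => h x t) Dp)
    (htime : ∀ x ∈ Dp, DifferentiableOn ℝ (h x) (Ioi 0))
    (hheat : ∀ x ∈ Dp, ∀ t > 0, deriv (h x) t = lap2 (fun y => h y t) x)
    (hfrontier : ∀ x ∈ frontier Dp, ∀ t > 0, h x t = 0)
    (hbound : ∀ x ∈ closure Dp, ∀ t > 0, h x t ∈ Icc 0 1)
    (hinit : ∀ x ∈ Dp, Tendsto (h x) (𝓝[>] 0) (𝓝 1))
    {x : ℝ × ℝ} (hx : x ∈ Dp) (hx₁ : 1 / 2 ≤ x.1) {t : ℝ} (ht : 0 < t) :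
    fderiv ℝ (fun y => h y t) x (1, 0) < 0 := by
  have hpre : Complex.equivRealProdCLM ⁻¹' Dp = halfDisk :=
    hDp ▸ preimage_equivRealProdCLM_eq_halfDisk
  have hDp_open : IsOpen Dp := by
    rw [← Complex.equivRealProdCLM.toHomeomorph.isOpen_preimage]
    exact hpre ▸ isOpen_halfDisk
  have hflow := isGroundedHeatFlow_comp_equivRealProdCLM hDp_open hcont hspace htime hheat
    hfrontier hbound hinit
  rw [hpre] at hflow
  have hneg := hflow.fderiv_one_neg (p := ⟨x.1, x.2⟩) (hpre.subset hx) hx₁ ht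
  rw [fderiv_comp_equivRealProdCLM_apply fun y => h y t] at hneg
  simpa using hneg

/-- **The hot spot of the grounded half-disk moves.**  For the solution `h` of the heat
equation in the half-disk `D⁺` with zero Dirichlet boundary data and unit initial data,
`∂h/∂x₁(1/2, x₂, t) < 0` for all `t > 0`; in particular the maximum point `(1/2, 0)` of
the distance-to-the-boundary function is never a spatial critical point of `h(·,t)`. -/
theorem half_disk_hot_spot_moves
    (Dp : Set (ℝ × ℝ))
    (hDp : Dp = {p : ℝ × ℝ | p.1 ^ 2 + p.2 ^ 2 < 1 ∧ 0 < p.1})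
    (h : ℝ × ℝ → ℝ → ℝ)
    (hcont : ContinuousOn (fun q : (ℝ × ℝ) × ℝ => h q.1 q.2) (closure Dp ×ˢ Set.Ioi 0))
    (hx : ∀ t > (0 : ℝ), ContDiffOn ℝ 2 (fun x => h x t) Dp)
    (ht : ∀ x ∈ Dp, ContDiffOn ℝ 1 (fun t => h x t) (Set.Ioi 0))
    (hheat : ∀ x ∈ Dp, ∀ t > (0 : ℝ), deriv (fun s => h x s) t = lap2 (fun y => h y t) x)
    (hbc : ∀ x ∈ frontier Dp, ∀ t > (0 : ℝ), h x t = 0)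
    (hbound : ∀ x ∈ closure Dp, ∀ t > (0 : ℝ), 0 ≤ h x t ∧ h x t ≤ 1)
    (hinit : ∀ x ∈ Dp, Filter.Tendsto (fun t => h x t) (𝓝[>] 0) (𝓝 1)) :
    (∀ t > (0 : ℝ), ∀ x₂ : ℝ, ((1 / 2 : ℝ), x₂) ∈ Dp →
      fderiv ℝ (fun y => h y t) ((1 / 2 : ℝ), x₂) ((1, 0) : ℝ × ℝ) < 0) ∧
    (∀ t > (0 : ℝ), fderiv ℝ (fun y => h y t) (((1 / 2 : ℝ), (0 : ℝ))) ≠ 0) := by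
  have hneg (t : ℝ) (ht₀ : t > 0) (x₂ : ℝ) (hx₂ : ((1 / 2 : ℝ), x₂) ∈ Dp) :=
    half_disk_hot_spot_moves_general Dp hDp h hcont hx
      (fun x hxD => (ht x hxD).differentiableOn one_ne_zero) hheat hbc hbound hinit hx₂ le_rfl ht₀
  exact ⟨hneg, fun t ht₀ hcrit => (hneg t ht₀ 0 (by norm_num [hDp])).ne (by rw [hcrit]; rfl)⟩
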